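/- arXiv:1502.04931 — 11 statements merged into one kernel-verified Lean document; each statement's English description precedes it below -/
import Mathlib

section
/- Let a, b ≥ 1 and let μ₋, μ₊ = ((√b ∓ √(a(a+b-1)))/(a+b))². Then (1/(2π)) ∫_{μ₋}^{μ₊} √((μ₊-x)(x-μ₋))/(1-x) dx = a/(a+b)². -/
open Real

/-- If `1 - u ^ 2` is the square of `r > 0`, then `arcsin ∘ u` has derivative `u' / r`. -/
lemma hasDerivAt_arcsin_comp_of_one_sub_sq {u : ℝ → ℝ} {u' x r : ℝ} (hu : HasDerivAt u u' x)
    (hr : 0 < r) (h : 1 - u x ^ 2 = r ^ 2) :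
    HasDerivAt (fun y => arcsin (u y)) (u' / r) x := by
  have h₁ : u x ≠ -1 := by
    intro h'
    rw [h'] at h
    nlinarith [pow_pos hr 2]
  have h₂ : u x ≠ 1 := by
    intro h'
    rw [h'] at h
    nlinarith [pow_pos hr 2]
  have := (hasDerivAt_arcsin h₁ h₂).comp x hu
  rw [h, sqrt_sq hr.le] at this
  exact this.congr_deriv (by ring)

lemma hasDerivAt_arcsin_affine {α β y : ℝ} (hα : α < y) (hβ : y < β) :
    HasDerivAt (fun y => arcsin ((2 * y - α - β) / (β - α))) (1 / √((β - y) * (y - α))) y := by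
  have hd : 0 < β - α := by linarith
  have hR : 0 < (β - y) * (y - α) := mul_pos (by linarith) (by linarith)
  have hS := sqrt_pos.2 hR
  have hu : HasDerivAt (fun y => (2 * y - α - β) / (β - α)) (2 / (β - α)) y := by
    simpa using ((((hasDerivAt_id y).const_mul 2).sub_const α).sub_const β).div_const (β - α)
  refine (hasDerivAt_arcsin_comp_of_one_sub_sq hu
    (r := 2 * √((β - y) * (y - α)) / (β - α)) (by positivity) ?_).congr_deriv ?_
  swap
  · field_simp
  · rw [div_pow, div_pow, mul_pow, sq_sqrt hR.le]
    field_simp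
    ring

lemma hasDerivAt_sqrt_mul_arcsin_homographic {α β y : ℝ} (h0 : 0 ≤ α) (hα : α < y)
    (hβ : y < β) :
    HasDerivAt (fun y => √(α * β) * arcsin (((α + β) * y - 2 * α * β) / ((β - α) * y)))
      (α * β / (y * √((β - y) * (y - α)))) y := by
  rcases h0.eq_or_lt with rfl | h0
  · simpa using hasDerivAt_const y (0 : ℝ)
  have hy : 0 < y := h0.trans hα
  have hd : 0 < β - α := by linarith
  have hαβ : 0 < α * β := mul_pos h0 (hy.trans hβ)
  have hR : 0 < (β - y) * (y - α) := mul_pos (by linarith) (by linarith)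
  have hS := sqrt_pos.2 hR
  have hT := sqrt_pos.2 hαβ
  have hu : HasDerivAt (fun y => ((α + β) * y - 2 * α * β) / ((β - α) * y))
      (2 * (α * β) / ((β - α) * y ^ 2)) y := by
    refine ((((hasDerivAt_id y).const_mul (α + β)).sub_const (2 * α * β)).div
      ((hasDerivAt_id y).const_mul (β - α)) (mul_pos hd hy).ne').congr_deriv ?_
    simp only [id]
    field_simp
    ring
  refine ((hasDerivAt_arcsin_comp_of_one_sub_sq hu
    (r := 2 * √(α * β) * √((β - y) * (y - α)) / ((β - α) * y)) (by positivity) ?_).const_mul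
      √(α * β)).congr_deriv ?_
  swap
  · field_simp
  · rw [div_pow, div_pow, mul_pow, mul_pow, mul_pow, sq_sqrt hR.le, sq_sqrt hαβ.le]
    field_simp
    ring

lemma hasDerivAt_sqrt_mul_sub {α β y : ℝ} (hα : α < y) (hβ : y < β) :
    HasDerivAt (fun y => √((β - y) * (y - α)))
      ((α + β - 2 * y) / (2 * √((β - y) * (y - α)))) y := by
  have hR : 0 < (β - y) * (y - α) := mul_pos (by linarith) (by linarith)
  refine ((((hasDerivAt_id y).const_sub β).mul
    ((hasDerivAt_id y).sub_const α)).sqrt hR.ne').congr_deriv ?_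
  simp only [id, Pi.mul_apply]
  ring

theorem integral_sqrt_mul_sub_div {α β : ℝ} (h0 : 0 ≤ α) (h : α < β) :
    ∫ y in α..β, √((β - y) * (y - α)) / y = π * ((α + β) / 2 - √(α * β)) := by
  set F : ℝ → ℝ := fun y => √((β - y) * (y - α)) +
    (α + β) / 2 * arcsin ((2 * y - α - β) / (β - α)) -
    √(α * β) * arcsin (((α + β) * y - 2 * α * β) / ((β - α) * y)) with hF
  have hd : β - α ≠ 0 := by linarith
  have hβ : β ≠ 0 := by linarith
  have hcont : ContinuousOn F (Set.Icc α β) := by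
    refine ContinuousOn.sub (by fun_prop) ?_
    rcases h0.eq_or_lt with rfl | h0
    · simpa using continuousOn_const
    · refine continuousOn_const.mul (continuous_arcsin.comp_continuousOn ?_)
      exact ContinuousOn.div (by fun_prop) (by fun_prop)
        fun y hy => mul_ne_zero hd (by linarith [hy.1])
  have hderiv : ∀ y ∈ Set.Ioo α β, HasDerivAt F (√((β - y) * (y - α)) / y) y := by
    intro y hy
    have hy0 : y ≠ 0 := by linarith [hy.1]
    have hR : 0 < (β - y) * (y - α) := mul_pos (by linarith [hy.2]) (by linarith [hy.1])
    have hS := sqrt_pos.2 hR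
    refine (((hasDerivAt_sqrt_mul_sub hy.1 hy.2).add
      ((hasDerivAt_arcsin_affine hy.1 hy.2).const_mul ((α + β) / 2))).sub
      (hasDerivAt_sqrt_mul_arcsin_homographic h0 hy.1 hy.2)).congr_deriv ?_
    field_simp
    rw [sq_sqrt hR.le]
    ring
  have hint : IntervalIntegrable (fun y => √((β - y) * (y - α)) / y) MeasureTheory.volume α β :=
    (intervalIntegrable_iff_integrableOn_Ioc_of_le h.le).2 <|
      intervalIntegral.integrableOn_deriv_of_nonneg hcont hderiv
        fun y hy => div_nonneg (sqrt_nonneg _) (by linarith [hy.1])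
  rw [intervalIntegral.integral_eq_sub_of_hasDerivAt_of_le h.le hcont hderiv hint]
  have e₁ : (2 * β - α - β) / (β - α) = 1 := by field_simp; ring
  have e₂ : (2 * α - α - β) / (β - α) = -1 := by field_simp; ring
  have e₃ : ((α + β) * β - 2 * α * β) / ((β - α) * β) = 1 := by field_simp; ring
  have e₄ : √(α * β) * arcsin (((α + β) * α - 2 * α * β) / ((β - α) * α)) =
      √(α * β) * -(π / 2) := by
    rcases h0.eq_or_lt with rfl | h0
    · simp
    · rw [show ((α + β) * α - 2 * α * β) / ((β - α) * α) = -1 by field_simp; ring,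
        arcsin_neg_one]
  simp only [hF, e₁, e₂, e₃, e₄, arcsin_one, arcsin_neg_one, sub_self, zero_mul, mul_zero,
    sqrt_zero]
  ring

theorem integral_sqrt_mul_sub_div_one_sub {m p : ℝ} (hmp : m < p) (hp : p ≤ 1) :
    ∫ x in m..p, √((p - x) * (x - m)) / (1 - x) =
      π * ((2 - p - m) / 2 - √((1 - p) * (1 - m))) := by
  have key := integral_sqrt_mul_sub_div (α := 1 - p) (β := 1 - m) (by linarith) (by linarith)
  rw [← intervalIntegral.integral_comp_sub_left
    (fun y => √((1 - m - y) * (y - (1 - p))) / y) 1] at key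
  convert key using 1
  · refine intervalIntegral.integral_congr fun x _ => ?_
    ring_nf
  · ring_nf

theorem wachter_kernel_integral (a b : ℝ) (ha : 1 ≤ a) (hb : 1 ≤ b) (μm μp : ℝ)
    (hμm : μm = ((Real.sqrt b - Real.sqrt (a * (a + b - 1))) / (a + b)) ^ 2)
    (hμp : μp = ((Real.sqrt b + Real.sqrt (a * (a + b - 1))) / (a + b)) ^ 2) :
    (1 / (2 * π)) * ∫ x in μm..μp, Real.sqrt ((μp - x) * (x - μm)) / (1 - x)
      = a / (a + b) ^ 2 := by
  have hs : 0 < a + b := by linarith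
  have hc : 0 < a * (a + b - 1) := mul_pos (by linarith) (by linarith)
  have hS := sqrt_pos.2 (show 0 < b by linarith)
  have hT := sqrt_pos.2 hc
  have hS2 := sq_sqrt (show 0 ≤ b by linarith)
  have hT2 := sq_sqrt hc.le
  set S := √b
  set T := √(a * (a + b - 1))
  have hlt : μm < μp := by
    rw [hμm, hμp, div_pow, div_pow]
    gcongr ?_ / _
    nlinarith [mul_pos hS hT]
  have hle : μp ≤ 1 := by
    rw [hμp, sq_le_one_iff₀ (by positivity), div_le_one hs]
    refine abs_le_of_sq_le_sq' ?_ hs.le |>.2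
    have hST : 2 * (S * T) ≤ a * b + b ^ 2 + a - b := by
      refine abs_le_of_sq_le_sq' ?_ (by nlinarith) |>.2
      have : (2 * (S * T)) ^ 2 = 4 * (b * (a * (a + b - 1))) := by
        rw [mul_pow, mul_pow, hS2, hT2]
        ring
      nlinarith [sq_nonneg ((b - 1) * (a + b))]
    nlinarith
  have hprod : (1 - μp) * (1 - μm) = ((b - 1) / (a + b)) ^ 2 := by
    have : (1 - μp) * (1 - μm) =
        (((a + b) ^ 2 - S ^ 2 - T ^ 2) ^ 2 - 4 * S ^ 2 * T ^ 2) / (a + b) ^ 4 := by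
      rw [hμm, hμp]; field_simp; ring
    rw [this, hS2, hT2]
    field_simp
    ring
  have hsum : 2 - μp - μm = 2 * ((a + b) ^ 2 - S ^ 2 - T ^ 2) / (a + b) ^ 2 := by
    rw [hμm, hμp]; field_simp; ring
  rw [integral_sqrt_mul_sub_div_one_sub hlt hle, hprod, hsum, hS2, hT2,
    sqrt_sq (div_nonneg (by linarith) hs.le)]
  field_simp
  ring
end

section
/- For every integer n ≥ 0, ∫_{-2}^{2} x^n · √(4-x²)/(2π) dx equals the Catalan number C_{n/2} if n is even, and equals 0 if n is odd. -/
open Real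

/-- The recurrence for the moments of the cosine over a half period. -/
lemma integral_cos_pow_zero_pi_add_two (n : ℕ) :
    ∫ θ in 0..π, cos θ ^ (n + 2) = (n + 1) / (n + 2) * ∫ θ in 0..π, cos θ ^ n := by
  simp [integral_cos_pow]

lemma integral_cos_pow_zero_pi_even (k : ℕ) :
    ∫ θ in 0..π, cos θ ^ (2 * k) = π * k.centralBinom / 4 ^ k := by
  induction k with
  | zero => simp
  | succ k ih =>
    have h : ((k : ℝ) + 1) * (k + 1).centralBinom = 2 * (2 * k + 1) * k.centralBinom := by
      exact_mod_cast Nat.succ_mul_centralBinom_succ k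
    have h' : ((k + 1).centralBinom : ℝ) = 2 * (2 * k + 1) * k.centralBinom / (k + 1) := by
      rw [eq_div_iff (by positivity), ← h, mul_comm]
    rw [mul_add_one, integral_cos_pow_zero_pi_add_two, ih, h']
    push_cast
    field_simp
    ring

lemma integral_cos_pow_zero_pi_odd (k : ℕ) :
    ∫ θ in 0..π, cos θ ^ (2 * k + 1) = 0 := by
  induction k with
  | zero => simp
  | succ k ih =>
    rw [show 2 * (k + 1) + 1 = 2 * k + 1 + 2 by ring, integral_cos_pow_zero_pi_add_two, ih,
      mul_zero]

/-- The substitution `x = 2 cos θ` in the moments of the semicircle law. -/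
lemma integral_pow_mul_semicircle_eq_integral_cos_pow (n : ℕ) :
    ∫ x in (-2 : ℝ)..2, x ^ n * (√(4 - x ^ 2) / (2 * π))
      = 2 ^ (n + 1) / (π * (n + 2)) * ∫ θ in 0..π, cos θ ^ n := by
  have hsub := intervalIntegral.integral_comp_mul_deriv (a := 0) (b := π)
    (f := fun θ ↦ 2 * cos θ) (f' := fun θ ↦ 2 * -sin θ)
    (g := fun x ↦ x ^ n * (√(4 - x ^ 2) / (2 * π)))
    (fun θ _ ↦ (hasDerivAt_cos θ).const_mul 2) (by fun_prop) (by fun_prop)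
  simp only [Function.comp_apply, cos_zero, cos_pi, mul_one, mul_neg,
    intervalIntegral.integral_neg] at hsub
  rw [intervalIntegral.integral_symm, ← hsub, neg_neg]
  have hcongr : ∀ θ ∈ Set.uIcc 0 π,
      (2 * cos θ) ^ n * (√(4 - (2 * cos θ) ^ 2) / (2 * π)) * (2 * sin θ)
        = 2 ^ (n + 1) / π * (cos θ ^ n - cos θ ^ (n + 2)) := by
    intro θ hθ
    rw [Set.uIcc_of_le pi_pos.le] at hθ
    have hsqrt : √(4 - (2 * cos θ) ^ 2) = 2 * sin θ := by
      rw [show 4 - (2 * cos θ) ^ 2 = (2 * sin θ) ^ 2 by linear_combination -4 * sin_sq_add_cos_sq θ]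
      exact sqrt_sq (mul_nonneg zero_le_two (sin_nonneg_of_mem_Icc hθ))
    rw [hsqrt]
    field_simp
    rw [mul_pow, sin_sq]
    ring
  rw [intervalIntegral.integral_congr hcongr, intervalIntegral.integral_const_mul,
    intervalIntegral.integral_sub (Continuous.intervalIntegrable (by fun_prop) _ _)
      (Continuous.intervalIntegrable (by fun_prop) _ _), integral_cos_pow_zero_pi_add_two]
  field_simp
  ring

/-- The moments of the Wigner semicircle law are the Catalan numbers. -/
theorem semicircle_moments (n : ℕ) :
    ∫ x in (-2 : ℝ)..2, x ^ n * (Real.sqrt (4 - x ^ 2) / (2 * π))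
      = if Even n then (catalan (n / 2) : ℝ) else 0 := by
  rw [integral_pow_mul_semicircle_eq_integral_cos_pow]
  obtain ⟨k, rfl | rfl⟩ := n.even_or_odd'
  · have h : (k.centralBinom : ℝ) = (k + 1) * catalan k := by
      exact_mod_cast (succ_mul_catalan_eq_centralBinom k).symm
    rw [if_pos (even_two_mul k), Nat.mul_div_cancel_left k two_pos,
      integral_cos_pow_zero_pi_even, h, pow_succ, pow_mul]
    push_cast
    norm_num
    field_simp
  · rw [if_neg (Nat.not_even_two_mul_add_one k), integral_cos_pow_zero_pi_odd, mul_zero]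
end

section
/- For every real z > 2, ∫_{-2}^{2} (1/(z-x)) · √(4-x²)/(2π) dx = (z - √(z²-4))/2. -/
open Real

/-- The derivative of `x ↦ arcsin (x / 2)` on `(-2, 2)`. -/
theorem hasDerivAt_arcsin_half {x : ℝ} (hx : 0 < 4 - x ^ 2) :
    HasDerivAt (fun x : ℝ => arcsin (x / 2)) (1 / √(4 - x ^ 2)) x := by
  have hsqrt : √(1 - (x / 2) ^ 2) = √(4 - x ^ 2) / 2 := by
    rw [show 1 - (x / 2) ^ 2 = (4 - x ^ 2) / 2 ^ 2 by ring, sqrt_div hx.le,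
      sqrt_sq (by norm_num)]
  have hpos := sqrt_pos.2 hx
  have hne₁ : x / 2 ≠ -1 := by intro h; nlinarith
  have hne₂ : x / 2 ≠ 1 := by intro h; nlinarith
  refine ((hasDerivAt_arcsin hne₁ hne₂).comp x ((hasDerivAt_id x).div_const 2)).congr_deriv ?_
  rw [hsqrt]
  field_simp

/-- The derivative of `x ↦ arcsin ((z x - 4) / (2 (z - x)))`, which maps `[-2, 2]` onto
`[-π / 2, π / 2]`. -/
theorem hasDerivAt_arcsin_moebius {z x : ℝ} (hz : 2 < z) (hzx : 0 < z - x)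
    (hx : 0 < 4 - x ^ 2) :
    HasDerivAt (fun x : ℝ => arcsin ((z * x - 4) / (2 * (z - x))))
      (√(z ^ 2 - 4) / ((z - x) * √(4 - x ^ 2))) x := by
  have hs : 0 < z ^ 2 - 4 := by nlinarith
  have hone : 1 - ((z * x - 4) / (2 * (z - x))) ^ 2
      = (z ^ 2 - 4) * (4 - x ^ 2) / (2 * (z - x)) ^ 2 := by
    field_simp
    ring
  have hpos : 0 < 1 - ((z * x - 4) / (2 * (z - x))) ^ 2 := by
    rw [hone]
    positivity
  have hsqrt : √(1 - ((z * x - 4) / (2 * (z - x))) ^ 2)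
      = √(z ^ 2 - 4) * √(4 - x ^ 2) / (2 * (z - x)) := by
    rw [hone, sqrt_div (by positivity), sqrt_mul hs.le, sqrt_sq (by positivity)]
  have hne₁ : (z * x - 4) / (2 * (z - x)) ≠ -1 := by intro h; rw [h] at hpos; norm_num at hpos
  have hne₂ : (z * x - 4) / (2 * (z - x)) ≠ 1 := by intro h; rw [h] at hpos; norm_num at hpos
  have hinner : HasDerivAt (fun x : ℝ => (z * x - 4) / (2 * (z - x)))
      ((z ^ 2 - 4) / (2 * (z - x) ^ 2)) x := by
    refine ((((hasDerivAt_id x).const_mul z).sub_const 4).div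
      (((hasDerivAt_id x).const_sub z).const_mul 2) (by simpa using hzx.ne')).congr_deriv ?_
    simp only [id]
    field_simp
    ring
  refine ((hasDerivAt_arcsin hne₁ hne₂).comp x hinner).congr_deriv ?_
  rw [hsqrt]
  have hs' := sqrt_pos.2 hs
  have hx' := sqrt_pos.2 hx
  field_simp
  rw [sq_sqrt hs.le]

/-- An antiderivative of `√(4 - x ^ 2) / (z - x)` on `(-2, 2)`. -/
theorem hasDerivAt_semicircle_antideriv {z x : ℝ} (hz : 2 < z) (hzx : 0 < z - x)
    (hx : 0 < 4 - x ^ 2) :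
    HasDerivAt (fun x : ℝ => z * arcsin (x / 2) - √(4 - x ^ 2)
        - √(z ^ 2 - 4) * arcsin ((z * x - 4) / (2 * (z - x))))
      (√(4 - x ^ 2) / (z - x)) x := by
  have hs : 0 < z ^ 2 - 4 := by nlinarith
  have hroot : HasDerivAt (fun x : ℝ => √(4 - x ^ 2)) (-(2 * x) / (2 * √(4 - x ^ 2))) x := by
    simpa using (((hasDerivAt_id x).pow 2).const_sub 4).sqrt hx.ne'
  refine ((((hasDerivAt_arcsin_half hx).const_mul z).sub hroot).sub
    ((hasDerivAt_arcsin_moebius hz hzx hx).const_mul √(z ^ 2 - 4))).congr_deriv ?_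
  have hx' := sqrt_pos.2 hx
  field_simp
  rw [sq_sqrt hs.le, sq_sqrt hx.le]
  ring

/-- The Cauchy transform of the Wigner semicircle law. -/
theorem semicircle_cauchy_transform (z : ℝ) (hz : 2 < z) :
    ∫ x in (-2 : ℝ)..2, (1 / (z - x)) * (Real.sqrt (4 - x ^ 2) / (2 * π))
      = (z - Real.sqrt (z ^ 2 - 4)) / 2 := by
  have hne : ∀ x ∈ Set.Icc (-2 : ℝ) 2, z - x ≠ 0 := fun x hx => by linarith [hx.2]
  have hint : ∫ x in (-2 : ℝ)..2, √(4 - x ^ 2) / (z - x) = π * (z - √(z ^ 2 - 4)) := by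
    rw [intervalIntegral.integral_eq_sub_of_hasDerivAt_of_le (a := -2) (b := 2) (by norm_num) ?_
      (fun x hx => hasDerivAt_semicircle_antideriv hz (by linarith [hx.2])
        (by nlinarith [hx.1, hx.2])) ?_]
    · have h₁ : (z * 2 - 4) / (2 * (z - 2)) = 1 := by
        rw [div_eq_one_iff_eq (by linarith)]
        ring
      have h₂ : (z * -2 - 4) / (2 * (z - -2)) = -1 := by
        rw [div_eq_iff (by linarith)]
        ring
      rw [h₁, h₂]
      norm_num
      ring
    · have hu : ContinuousOn (fun x : ℝ => (z * x - 4) / (2 * (z - x))) (Set.Icc (-2) 2) :=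
        ContinuousOn.div (by fun_prop) (by fun_prop)
          fun x hx => mul_ne_zero two_ne_zero (hne x hx)
      exact ContinuousOn.sub (by fun_prop)
        (continuousOn_const.mul (continuous_arcsin.comp_continuousOn hu))
    · apply ContinuousOn.intervalIntegrable_of_Icc (by norm_num)
      exact ContinuousOn.div (by fun_prop) (by fun_prop) hne
  have hfactor : ∀ x : ℝ, (1 / (z - x)) * (√(4 - x ^ 2) / (2 * π))
      = (2 * π)⁻¹ * (√(4 - x ^ 2) / (z - x)) := fun x => by ring
  simp_rw [hfactor]
  rw [intervalIntegral.integral_const_mul, hint]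
  have := pi_pos
  field_simp
end

section
/- Let λ ≥ 1 and λ± = (1 ± √λ)². For every real z > λ₊, ∫_{λ₋}^{λ₊} (1/(z-x)) · √((λ₊-x)(x-λ₋))/(2πx) dx = (1 - λ + z - √((1-λ+z)² - 4z))/(2z). -/
open Real

/-- An antiderivative of `√(1 - y²) / (a - y)`. -/
theorem hasDerivAt_sqrt_one_sub_sq_div_sub {a y : ℝ} (ha : 1 ≤ a) (hy : y ∈ Set.Ioo (-1 : ℝ) 1) :
    HasDerivAt (fun y : ℝ => -√(1 - y ^ 2) + a * arcsin y
      - √(a ^ 2 - 1) * arcsin ((a * y - 1) / (a - y))) (√(1 - y ^ 2) / (a - y)) y := by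
  obtain ⟨hy1, hy2⟩ := hy
  have hay : 0 < a - y := by linarith
  have hpos : 0 < 1 - y ^ 2 := by nlinarith
  have hr : 0 < √(1 - y ^ 2) := sqrt_pos.2 hpos
  have hr2 : √(1 - y ^ 2) ^ 2 = 1 - y ^ 2 := sq_sqrt hpos.le
  have h1 : HasDerivAt (fun y : ℝ => √(1 - y ^ 2)) (-(2 * y) / (2 * √(1 - y ^ 2))) y := by
    have := ((hasDerivAt_pow 2 y).const_sub 1).sqrt hpos.ne'
    simpa using this
  have h2 := (hasDerivAt_arcsin (x := y) (by linarith) (by linarith)).const_mul a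
  rcases ha.eq_or_lt with rfl | ha1
  · simp only [one_pow, sub_self, sqrt_zero, zero_mul, sub_zero]
    refine (h1.neg.add h2).congr_deriv ?_
    field_simp
    linear_combination -hr2
  have hw : 0 < a ^ 2 - 1 := by nlinarith
  have hq : 0 < √(a ^ 2 - 1) := sqrt_pos.2 hw
  have hq2 : √(a ^ 2 - 1) ^ 2 = a ^ 2 - 1 := sq_sqrt hw.le
  have hu : HasDerivAt (fun y : ℝ => (a * y - 1) / (a - y)) ((a ^ 2 - 1) / (a - y) ^ 2) y := by
    refine ((((hasDerivAt_id y).const_mul a).sub_const 1).div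
      ((hasDerivAt_id y).const_sub a) hay.ne').congr_deriv ?_
    simp only [id]
    ring
  have hsq : √(1 - ((a * y - 1) / (a - y)) ^ 2) = √(a ^ 2 - 1) * √(1 - y ^ 2) / (a - y) := by
    rw [← sqrt_mul hw.le, ← sqrt_sq hay.le, ← sqrt_div' _ (sq_nonneg _), sqrt_sq hay.le]
    congr 1
    field_simp
    ring
  have hlo : (a * y - 1) / (a - y) ≠ -1 := by
    rw [Ne, div_eq_iff hay.ne']
    nlinarith
  have hhi : (a * y - 1) / (a - y) ≠ 1 := by
    rw [Ne, div_eq_iff hay.ne']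
    nlinarith
  have h3 := ((hasDerivAt_arcsin hlo hhi).comp y hu).const_mul √(a ^ 2 - 1)
  rw [hsq] at h3
  refine ((h1.neg.add h2).sub h3).congr_deriv ?_
  field_simp
  linear_combination -hr2

theorem continuousOn_antideriv_sqrt_one_sub_sq_div_sub {a : ℝ} (ha : 1 ≤ a) :
    ContinuousOn (fun y : ℝ => -√(1 - y ^ 2) + a * arcsin y
      - √(a ^ 2 - 1) * arcsin ((a * y - 1) / (a - y))) (Set.Icc (-1) 1) := by
  rcases ha.eq_or_lt with rfl | ha1
  · simp only [one_pow, sub_self, sqrt_zero, zero_mul, sub_zero]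
    fun_prop
  · have : ContinuousOn (fun y : ℝ => (a * y - 1) / (a - y)) (Set.Icc (-1) 1) :=
      ContinuousOn.div (by fun_prop) (by fun_prop) fun y hy => by linarith [hy.2]
    have := continuous_arcsin.comp_continuousOn this
    simp only [Function.comp_def] at this
    fun_prop

theorem intervalIntegrable_sqrt_one_sub_sq_div_sub {a : ℝ} (ha : 1 ≤ a) :
    IntervalIntegrable (fun y : ℝ => √(1 - y ^ 2) / (a - y)) MeasureTheory.volume (-1) 1 := by
  apply intervalIntegral.intervalIntegrable_deriv_of_nonneg
    (g := fun y : ℝ => -√(1 - y ^ 2) + a * arcsin y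
      - √(a ^ 2 - 1) * arcsin ((a * y - 1) / (a - y)))
  · rw [Set.uIcc_of_le (by norm_num)]
    exact continuousOn_antideriv_sqrt_one_sub_sq_div_sub ha
  · intro y hy
    rw [min_eq_left (by norm_num), max_eq_right (by norm_num)] at hy
    exact hasDerivAt_sqrt_one_sub_sq_div_sub ha hy
  · intro y hy
    rw [min_eq_left (by norm_num), max_eq_right (by norm_num)] at hy
    exact div_nonneg (sqrt_nonneg _) (by linarith [hy.2])

/-- The Cauchy transform of the (unnormalized) semicircle law on `[-1, 1]`. -/
theorem integral_sqrt_one_sub_sq_div_sub {a : ℝ} (ha : 1 ≤ a) :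
    ∫ y in (-1 : ℝ)..1, √(1 - y ^ 2) / (a - y) = π * (a - √(a ^ 2 - 1)) := by
  rw [intervalIntegral.integral_eq_sub_of_hasDerivAt_of_le (by norm_num)
    (continuousOn_antideriv_sqrt_one_sub_sq_div_sub ha)
    (fun y hy => hasDerivAt_sqrt_one_sub_sq_div_sub ha hy)
    (intervalIntegrable_sqrt_one_sub_sq_div_sub ha)]
  have hm : (a * -1 - 1) / (a - -1) = -1 := by
    rw [div_eq_iff (by linarith)]
    ring
  rw [hm]
  rcases ha.eq_or_lt with rfl | ha1
  · norm_num
  · have hp : (a * 1 - 1) / (a - 1) = 1 := by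
      rw [div_eq_iff (by linarith)]
      ring
    rw [hp]
    norm_num
    ring

theorem intervalIntegrable_sqrt_one_sub_sq_div_add {b : ℝ} (hb : 1 ≤ b) :
    IntervalIntegrable (fun y : ℝ => √(1 - y ^ 2) / (b + y)) MeasureTheory.volume (-1) 1 := by
  have h := (intervalIntegrable_sqrt_one_sub_sq_div_sub hb).comp_mul_left (c := -1)
  simpa using h.symm

theorem integral_sqrt_one_sub_sq_div_add {b : ℝ} (hb : 1 ≤ b) :
    ∫ y in (-1 : ℝ)..1, √(1 - y ^ 2) / (b + y) = π * (b - √(b ^ 2 - 1)) := by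
  rw [← integral_sqrt_one_sub_sq_div_sub hb]
  have h := intervalIntegral.integral_comp_neg (a := -1) (b := 1)
    (fun y : ℝ => √(1 - y ^ 2) / (b - y))
  simpa using h

/-- The Cauchy transform of the Marchenko–Pastur law. -/
theorem marchenko_pastur_cauchy_transform (l : ℝ) (hl : 1 ≤ l) (lm lp : ℝ)
    (hlm : lm = (1 - Real.sqrt l) ^ 2) (hlp : lp = (1 + Real.sqrt l) ^ 2)
    (z : ℝ) (hz : lp < z) :
    ∫ x in lm..lp, (1 / (z - x)) * (Real.sqrt ((lp - x) * (x - lm)) / (2 * π * x))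
      = (1 - l + z - Real.sqrt ((1 - l + z) ^ 2 - 4 * z)) / (2 * z) := by
  obtain ⟨s, hs, rfl⟩ : ∃ s : ℝ, 1 ≤ s ∧ l = s ^ 2 :=
    ⟨√l, one_le_sqrt.2 hl, (sq_sqrt (by linarith)).symm⟩
  have hs0 : 0 < s := by linarith
  rw [sqrt_sq hs0.le] at hlm hlp
  subst hlm hlp
  have hz0 : 0 < z := by nlinarith
  obtain ⟨a, ha⟩ : ∃ a : ℝ, 2 * s * a = z - 1 - s ^ 2 :=
    ⟨(z - 1 - s ^ 2) / (2 * s), by field_simp⟩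
  obtain ⟨b, hb⟩ : ∃ b : ℝ, 2 * s * b = 1 + s ^ 2 := ⟨(1 + s ^ 2) / (2 * s), by field_simp⟩
  have ha1 : 1 < a := by nlinarith
  have hb1 : 1 ≤ b := by nlinarith [sq_nonneg (s - 1)]
  have hscale : ∀ t : ℝ, 2 * s * √t = √((2 * s) ^ 2 * t) := fun t => by
    rw [sqrt_mul (sq_nonneg _), sqrt_sq (by linarith)]
  have hA : 2 * s * √(a ^ 2 - 1) = √((1 - s ^ 2 + z) ^ 2 - 4 * z) := by
    rw [hscale]
    congr 1
    linear_combination (2 * s * a + (z - 1 - s ^ 2)) * ha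
  have hB : 2 * s * √(b ^ 2 - 1) = s ^ 2 - 1 := by
    rw [hscale, ← sqrt_sq (show 0 ≤ s ^ 2 - 1 by nlinarith)]
    congr 1
    linear_combination (2 * s * b + (1 + s ^ 2)) * hb
  have hsub := intervalIntegral.mul_integral_comp_mul_add (a := -1) (b := 1) (c := 2 * s) (d := 1 + s ^ 2)
    (f := fun x => (1 / (z - x)) * (√(((1 + s) ^ 2 - x) * (x - (1 - s) ^ 2)) / (2 * π * x)))
  rw [show 2 * s * -1 + (1 + s ^ 2) = (1 - s) ^ 2 by ring,
    show 2 * s * 1 + (1 + s ^ 2) = (1 + s) ^ 2 by ring] at hsub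
  rw [← hsub]
  have hcongr : ∀ y ∈ Set.uIcc (-1 : ℝ) 1,
      (1 / (z - (2 * s * y + (1 + s ^ 2)))) *
        (√(((1 + s) ^ 2 - (2 * s * y + (1 + s ^ 2))) * ((2 * s * y + (1 + s ^ 2)) - (1 - s) ^ 2))
          / (2 * π * (2 * s * y + (1 + s ^ 2))))
      = (1 / (2 * π * z)) * (√(1 - y ^ 2) / (b + y) + √(1 - y ^ 2) / (a - y)) := by
    intro y hy
    rw [Set.uIcc_of_le (by norm_num)] at hy
    have hzx : z - (2 * s * y + (1 + s ^ 2)) = 2 * s * (a - y) := by linear_combination -ha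
    have hx : 2 * s * y + (1 + s ^ 2) = 2 * s * (b + y) := by linear_combination -hb
    have hroot : √(((1 + s) ^ 2 - (2 * s * y + (1 + s ^ 2))) *
        ((2 * s * y + (1 + s ^ 2)) - (1 - s) ^ 2)) = 2 * s * √(1 - y ^ 2) := by
      rw [hscale]
      congr 1
      ring
    rw [hroot, hzx, hx]
    rcases hy.1.eq_or_lt with rfl | hy1
    · norm_num
    have hay : a - y ≠ 0 := by linarith [hy.2]
    have hby : b + y ≠ 0 := by linarith
    have hzab : z = 2 * s * (a + b) := by linear_combination -ha - hb
    have hab : a + b ≠ 0 := by linarith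
    rw [hzab]
    field_simp
    ring
  rw [intervalIntegral.integral_congr hcongr, intervalIntegral.integral_const_mul,
    intervalIntegral.integral_add (intervalIntegrable_sqrt_one_sub_sq_div_add hb1)
      (intervalIntegrable_sqrt_one_sub_sq_div_sub ha1.le),
    integral_sqrt_one_sub_sq_div_add hb1, integral_sqrt_one_sub_sq_div_sub ha1.le, ← hA]
  field_simp
  linear_combination ha + hb - hB
end

section
/- Let v ≥ 2 be real. For every real z with z > 2√(v-1) and z ≠ v, ∫_{-2√(v-1)}^{2√(v-1)} (1/(z-x)) · v√(4(v-1)-x²)/(2π(v²-x²)) dx = ((v-2)z - v√(z² - 4(v-1)))/(2(v²-z²)). -/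
open Real

/-- A primitive of `x ↦ (a² - R²) / ((a - x) * √(R² - x²))` on `(-R, R)`. -/
theorem hasDerivAt_sqrt_mul_arcsin {R a x : ℝ} (hR : 0 < R) (ha : R ≤ a)
    (hx : x ∈ Set.Ioo (-R) R) :
    HasDerivAt (fun y => √(a ^ 2 - R ^ 2) * arcsin ((a * y - R ^ 2) / (R * (a - y))))
      ((a ^ 2 - R ^ 2) / ((a - x) * √(R ^ 2 - x ^ 2))) x := by
  obtain ⟨hx₁, hx₂⟩ := hx
  rcases ha.eq_or_lt with rfl | ha
  · simpa using hasDerivAt_const x (0 : ℝ)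
  have hax : 0 < a - x := by linarith
  have hD : 0 < a ^ 2 - R ^ 2 := by nlinarith
  have hE : 0 < R ^ 2 - x ^ 2 := by nlinarith
  have hu : HasDerivAt (fun y => (a * y - R ^ 2) / (R * (a - y)))
      ((a ^ 2 - R ^ 2) / (R * (a - x) ^ 2)) x := by
    have h := (((hasDerivAt_id x).const_mul a).sub_const (R ^ 2)).div
      (((hasDerivAt_id x).const_sub a).const_mul R) (by simp; constructor <;> positivity)
    refine h.congr_deriv ?_
    simp only [id]
    field_simp
    ring
  have hone : 1 - ((a * x - R ^ 2) / (R * (a - x))) ^ 2 =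
      (a ^ 2 - R ^ 2) * (R ^ 2 - x ^ 2) / (R * (a - x)) ^ 2 := by
    field_simp
    ring
  have hpos : 0 < 1 - ((a * x - R ^ 2) / (R * (a - x))) ^ 2 := by
    rw [hone]
    positivity
  have h := ((hasDerivAt_arcsin (x := (a * x - R ^ 2) / (R * (a - x)))
    (fun h => by rw [h] at hpos; norm_num at hpos)
    (fun h => by rw [h] at hpos; norm_num at hpos)).comp x hu).const_mul (√(a ^ 2 - R ^ 2))
  refine h.congr_deriv ?_
  have hs : √(a ^ 2 - R ^ 2) ≠ 0 := (sqrt_pos.2 hD).ne'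
  have ht : √(R ^ 2 - x ^ 2) ≠ 0 := (sqrt_pos.2 hE).ne'
  rw [hone, sqrt_div (by positivity), sqrt_mul hD.le, sqrt_sq (by positivity)]
  field_simp

theorem continuousOn_sqrt_mul_arcsin {R a : ℝ} (hR : 0 < R) (ha : R ≤ a) :
    ContinuousOn (fun y => √(a ^ 2 - R ^ 2) * arcsin ((a * y - R ^ 2) / (R * (a - y))))
      (Set.Icc (-R) R) := by
  rcases ha.eq_or_lt with rfl | ha
  · simpa using continuousOn_const
  refine continuousOn_const.mul (continuous_arcsin.comp_continuousOn
    (ContinuousOn.div (by fun_prop) (by fun_prop) fun y hy => ?_))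
  have : 0 < a - y := by linarith [hy.2]
  positivity

theorem hasDerivAt_semicircle_primitive {R a x : ℝ} (hR : 0 < R) (ha : R ≤ a)
    (hx : x ∈ Set.Ioo (-R) R) :
    HasDerivAt (fun y => a * arcsin (y / R) - √(R ^ 2 - y ^ 2) -
        √(a ^ 2 - R ^ 2) * arcsin ((a * y - R ^ 2) / (R * (a - y))))
      (√(R ^ 2 - x ^ 2) / (a - x)) x := by
  have hG := hasDerivAt_sqrt_mul_arcsin hR ha hx
  obtain ⟨hx₁, hx₂⟩ := hx
  have hax : 0 < a - x := by linarith
  have hE : 0 < R ^ 2 - x ^ 2 := by nlinarith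
  have hone : 1 - (x / R) ^ 2 = (R ^ 2 - x ^ 2) / R ^ 2 := by field_simp
  have hpos : 0 < 1 - (x / R) ^ 2 := by
    rw [hone]
    positivity
  have h₁ := ((hasDerivAt_arcsin (x := x / R)
    (fun h => by rw [h] at hpos; norm_num at hpos)
    (fun h => by rw [h] at hpos; norm_num at hpos)).comp x
      ((hasDerivAt_id x).div_const R)).const_mul a
  have h₂ := (((hasDerivAt_id x).pow 2).const_sub (R ^ 2)).sqrt hE.ne'
  refine ((h₁.sub h₂).sub hG).congr_deriv ?_
  have ht : √(R ^ 2 - x ^ 2) ≠ 0 := (sqrt_pos.2 hE).ne'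
  have hsq : √(R ^ 2 - x ^ 2) ^ 2 = R ^ 2 - x ^ 2 := sq_sqrt hE.le
  rw [hone, sqrt_div hE.le, sqrt_sq hR.le]
  simp only [id, Pi.pow_apply]
  field_simp
  rw [hsq]
  push_cast
  ring

theorem continuousOn_semicircle_primitive {R a : ℝ} (hR : 0 < R) (ha : R ≤ a) :
    ContinuousOn (fun y => a * arcsin (y / R) - √(R ^ 2 - y ^ 2) -
        √(a ^ 2 - R ^ 2) * arcsin ((a * y - R ^ 2) / (R * (a - y)))) (Set.Icc (-R) R) := by
  refine ContinuousOn.sub (Continuous.continuousOn ?_) (continuousOn_sqrt_mul_arcsin hR ha)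
  exact (continuous_const.mul (continuous_arcsin.comp (by fun_prop))).sub (by fun_prop)

theorem intervalIntegrable_sqrt_div_sub {R a : ℝ} (hR : 0 < R) (ha : R ≤ a) :
    IntervalIntegrable (fun x => √(R ^ 2 - x ^ 2) / (a - x)) MeasureTheory.volume (-R) R := by
  rw [intervalIntegrable_iff_integrableOn_Ioc_of_le (by linarith)]
  exact intervalIntegral.integrableOn_deriv_of_nonneg
    (continuousOn_semicircle_primitive hR ha)
    (fun x hx => hasDerivAt_semicircle_primitive hR ha hx)
    fun x hx => div_nonneg (sqrt_nonneg _) (by linarith [hx.2])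

/-- The Cauchy transform of the (unnormalised) semicircle density, to the right of the support. -/
theorem integral_sqrt_div_sub {R a : ℝ} (hR : 0 < R) (ha : R ≤ a) :
    ∫ x in (-R)..R, √(R ^ 2 - x ^ 2) / (a - x) = π * (a - √(a ^ 2 - R ^ 2)) := by
  rw [intervalIntegral.integral_eq_sub_of_hasDerivAt_of_le (by linarith)
    (continuousOn_semicircle_primitive hR ha)
    (fun x hx => hasDerivAt_semicircle_primitive hR ha hx)
    (intervalIntegrable_sqrt_div_sub hR ha)]
  rcases ha.eq_or_lt with rfl | ha
  · simp [hR.ne']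
    ring
  have h₁ : (a * R - R ^ 2) / (R * (a - R)) = 1 := by
    have : a - R ≠ 0 := by linarith
    field_simp
  have h₂ : (a * -R - R ^ 2) / (R * (a - -R)) = -1 := by
    have : a - -R ≠ 0 := by linarith
    field_simp
    ring
  rw [h₁, h₂]
  simp [hR.ne']
  ring

theorem intervalIntegrable_sqrt_div_add {R a : ℝ} (hR : 0 < R) (ha : R ≤ a) :
    IntervalIntegrable (fun x => √(R ^ 2 - x ^ 2) / (a + x)) MeasureTheory.volume (-R) R := by
  simpa using ((IntervalIntegrable.iff_comp_neg).1 (intervalIntegrable_sqrt_div_sub hR ha)).symm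

theorem integral_sqrt_div_add {R a : ℝ} (hR : 0 < R) (ha : R ≤ a) :
    ∫ x in (-R)..R, √(R ^ 2 - x ^ 2) / (a + x) = π * (a - √(a ^ 2 - R ^ 2)) := by
  rw [← integral_sqrt_div_sub hR ha]
  have h := intervalIntegral.integral_comp_neg (a := -R) (b := R)
    (fun x => √(R ^ 2 - x ^ 2) / (a - x))
  simp only [neg_sq, sub_neg_eq_add, neg_neg] at h
  exact h

/-- The Cauchy transform of the Kesten–McKay law. -/
theorem kesten_mckay_cauchy_transform (v : ℝ) (hv : 2 ≤ v) (z : ℝ)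
    (hz : 2 * Real.sqrt (v - 1) < z) (hzv : z ≠ v) :
    ∫ x in (-(2 * Real.sqrt (v - 1)))..(2 * Real.sqrt (v - 1)),
        (1 / (z - x)) * (v * Real.sqrt (4 * (v - 1) - x ^ 2) / (2 * π * (v ^ 2 - x ^ 2)))
      = ((v - 2) * z - v * Real.sqrt (z ^ 2 - 4 * (v - 1))) / (2 * (v ^ 2 - z ^ 2)) := by
  have hR : 0 < 2 * √(v - 1) := by
    have : 0 < √(v - 1) := sqrt_pos.2 (by linarith)
    positivity
  have hRsq : 4 * (v - 1) = (2 * √(v - 1)) ^ 2 := by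
    rw [mul_pow, sq_sqrt (by linarith)]
    norm_num
  have hRv : 2 * √(v - 1) ≤ v := abs_le_of_sq_le_sq' (by nlinarith) (by linarith) |>.2
  have hsv : √(v ^ 2 - (2 * √(v - 1)) ^ 2) = v - 2 := by
    rw [← hRsq, show v ^ 2 - 4 * (v - 1) = (v - 2) ^ 2 by ring, sqrt_sq (by linarith)]
  rw [hRsq]
  generalize 2 * √(v - 1) = R at *
  have hzv₁ : z - v ≠ 0 := sub_ne_zero.2 hzv
  have hzv₂ : z + v ≠ 0 := by linarith
  have hvz : v ^ 2 - z ^ 2 ≠ 0 := by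
    rw [show v ^ 2 - z ^ 2 = -((z - v) * (z + v)) by ring]
    exact neg_ne_zero.2 (mul_ne_zero hzv₁ hzv₂)
  have hv₀ : v ≠ 0 := by linarith
  have hpf : ∀ x ∈ Set.uIcc (-R) R,
      (1 / (z - x)) * (v * √(R ^ 2 - x ^ 2) / (2 * π * (v ^ 2 - x ^ 2))) =
        v / (2 * π * (v ^ 2 - z ^ 2)) * (√(R ^ 2 - x ^ 2) / (z - x)) +
        1 / (4 * π * (z - v)) * (√(R ^ 2 - x ^ 2) / (v - x)) +
        1 / (4 * π * (z + v)) * (√(R ^ 2 - x ^ 2) / (v + x)) := by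
    intro x hx
    rw [Set.uIcc_of_le (by linarith)] at hx
    obtain ⟨hx₁, hx₂⟩ := hx
    rcases hx₁.eq_or_lt with rfl | hx₁
    · simp
    rcases hx₂.eq_or_lt with rfl | hx₂
    · simp
    have hzx : z - x ≠ 0 := by linarith
    have hvx₁ : v - x ≠ 0 := by linarith
    have hvx₂ : v + x ≠ 0 := by linarith
    rw [show v ^ 2 - x ^ 2 = (v - x) * (v + x) by ring,
      show v ^ 2 - z ^ 2 = -((z - v) * (z + v)) by ring]
    field_simp
    ring
  rw [intervalIntegral.integral_congr hpf, intervalIntegral.integral_add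
      (((intervalIntegrable_sqrt_div_sub hR hz.le).const_mul _).add
        ((intervalIntegrable_sqrt_div_sub hR hRv).const_mul _))
      ((intervalIntegrable_sqrt_div_add hR hRv).const_mul _),
    intervalIntegral.integral_add ((intervalIntegrable_sqrt_div_sub hR hz.le).const_mul _)
      ((intervalIntegrable_sqrt_div_sub hR hRv).const_mul _)]
  simp only [intervalIntegral.integral_const_mul]
  rw [integral_sqrt_div_sub hR hz.le, integral_sqrt_div_sub hR hRv, integral_sqrt_div_add hR hRv,
    hsv, show v ^ 2 - z ^ 2 = -((z - v) * (z + v)) by ring]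
  field_simp
  ring
end

section
/- Let a, b ≥ 1 and let μ₋, μ₊ = ((√b ∓ √(a(a+b-1)))/(a+b))². For every real z > 1, ∫_{μ₋}^{μ₊} (1/(z-x)) · (a+b)√((μ₊-x)(x-μ₋))/(2πx(1-x)) dx = (1 - a + (a+b-2)z - √((a + 1 - (a+b)z)² - 4a(1-z)))/(2z(1-z)). -/
open Real

/-- For `r ≤ c`, the function `(c² - r²) / ((c - u) √(r² - u²))` has a primitive on `[-r, r]` whose
total increment is `π √(c² - r²)`. -/
lemma exists_primitive_inv_sub_mul_sqrt {r c : ℝ} (hr : 0 < r) (hc : r ≤ c) :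
    ∃ G : ℝ → ℝ, ContinuousOn G (Set.Icc (-r) r) ∧
      (∀ u ∈ Set.Ioo (-r) r,
        HasDerivAt G ((c ^ 2 - r ^ 2) / ((c - u) * √(r ^ 2 - u ^ 2))) u) ∧
      G r - G (-r) = π * √(c ^ 2 - r ^ 2) := by
  rcases hc.eq_or_lt with rfl | hc
  · exact ⟨fun _ => 0, continuousOn_const,
      fun u _ => by simpa using hasDerivAt_const u (0 : ℝ), by simp⟩
  have hD : 0 < c ^ 2 - r ^ 2 := by nlinarith
  refine ⟨fun u => √(c ^ 2 - r ^ 2) * arcsin ((c * u - r ^ 2) / (r * (c - u))), ?_, ?_, ?_⟩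
  · refine continuousOn_const.mul (continuous_arcsin.comp_continuousOn
      (ContinuousOn.div (by fun_prop) (by fun_prop) fun u hu => ?_))
    have : 0 < c - u := by linarith [hu.2]
    positivity
  · rintro u ⟨hu1, hu2⟩
    have hcu : 0 < c - u := by linarith
    have hq : 0 < r ^ 2 - u ^ 2 := by nlinarith
    have hy : 1 - ((c * u - r ^ 2) / (r * (c - u))) ^ 2
        = (c ^ 2 - r ^ 2) * (r ^ 2 - u ^ 2) / (r * (c - u)) ^ 2 := by
      field_simp
      ring
    have hpos : 0 < 1 - ((c * u - r ^ 2) / (r * (c - u))) ^ 2 := by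
      rw [hy]; positivity
    have hsqrt : √(1 - ((c * u - r ^ 2) / (r * (c - u))) ^ 2)
        = √(c ^ 2 - r ^ 2) * √(r ^ 2 - u ^ 2) / (r * (c - u)) := by
      rw [hy, sqrt_div' _ (by positivity), sqrt_mul hD.le, sqrt_sq (by positivity)]
    have hquot : HasDerivAt (fun u => (c * u - r ^ 2) / (r * (c - u)))
        ((c ^ 2 - r ^ 2) / (r * (c - u) ^ 2)) u := by
      have h1 : HasDerivAt (fun u => c * u - r ^ 2) c u := by
        simpa using ((hasDerivAt_id u).const_mul c).sub_const (r ^ 2)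
      have h2 : HasDerivAt (fun u => r * (c - u)) (-r) u := by
        simpa using ((hasDerivAt_id u).const_sub c).const_mul r
      refine (h1.div h2 (by positivity)).congr_deriv ?_
      field_simp
      ring
    have harc := (hasDerivAt_arcsin (x := (c * u - r ^ 2) / (r * (c - u)))
      (fun h => by rw [h] at hpos; norm_num at hpos)
      (fun h => by rw [h] at hpos; norm_num at hpos)).comp u hquot
    rw [hsqrt] at harc
    refine (harc.const_mul (√(c ^ 2 - r ^ 2))).congr_deriv ?_
    have := sqrt_pos.2 hD
    have := sqrt_pos.2 hq
    field_simp
  · have h1 : (c * r - r ^ 2) / (r * (c - r)) = 1 := by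
      have : 0 < c - r := by linarith
      rw [div_eq_one_iff_eq (by positivity)]
      ring
    have h2 : (c * -r - r ^ 2) / (r * (c - -r)) = -1 := by
      have : 0 < c - -r := by linarith
      rw [div_eq_iff (by positivity)]
      ring
    simp only [h1, h2, arcsin_one, arcsin_neg_one]
    ring

/-- The Cauchy transform of the (unnormalised) semicircle of radius `r`, up to the edge. -/
lemma semicircle_cauchy_transform_s10 {r c : ℝ} (hr : 0 < r) (hc : r ≤ c) :
    IntervalIntegrable (fun u => √(r ^ 2 - u ^ 2) / (c - u)) MeasureTheory.volume (-r) r ∧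
      ∫ u in (-r)..r, √(r ^ 2 - u ^ 2) / (c - u) = π * (c - √(c ^ 2 - r ^ 2)) := by
  obtain ⟨G, hGc, hGd, hG⟩ := exists_primitive_inv_sub_mul_sqrt hr hc
  have hcont : ContinuousOn (fun u => -√(r ^ 2 - u ^ 2) + c * arcsin (u / r) - G u)
      (Set.Icc (-r) r) := by
    have : Continuous fun u => -√(r ^ 2 - u ^ 2) + c * arcsin (u / r) := by
      have := continuous_arcsin.comp (continuous_id.div_const r)
      have h2 : Continuous fun u : ℝ => √(r ^ 2 - u ^ 2) := by fun_prop
      exact h2.neg.add (continuous_const.mul this)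
    exact this.continuousOn.sub hGc
  have hderiv : ∀ u ∈ Set.Ioo (-r) r,
      HasDerivAt (fun u => -√(r ^ 2 - u ^ 2) + c * arcsin (u / r) - G u)
        (√(r ^ 2 - u ^ 2) / (c - u)) u := by
    rintro u ⟨hu1, hu2⟩
    have hcu : 0 < c - u := by linarith
    have hq : 0 < r ^ 2 - u ^ 2 := by nlinarith
    have hy : 1 - (u / r) ^ 2 = (r ^ 2 - u ^ 2) / r ^ 2 := by field_simp
    have hpos : 0 < 1 - (u / r) ^ 2 := by rw [hy]; positivity
    have hsqrt : √(1 - (u / r) ^ 2) = √(r ^ 2 - u ^ 2) / r := by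
      rw [hy, sqrt_div' _ (by positivity), sqrt_sq hr.le]
    have harc := (hasDerivAt_arcsin (x := u / r)
      (fun h => by rw [h] at hpos; norm_num at hpos)
      (fun h => by rw [h] at hpos; norm_num at hpos)).comp u ((hasDerivAt_id u).div_const r)
    rw [hsqrt] at harc
    have hroot := (((hasDerivAt_id u).pow 2).const_sub (r ^ 2)).sqrt hq.ne'
    refine ((hroot.neg.add (harc.const_mul c)).sub (hGd u ⟨hu1, hu2⟩)).congr_deriv ?_
    have hs := sqrt_pos.2 hq
    have hsq := sq_sqrt hq.le
    simp only [id, Pi.pow_apply]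
    field_simp
    rw [hsq]
    ring
  have hint : IntervalIntegrable (fun u => √(r ^ 2 - u ^ 2) / (c - u))
      MeasureTheory.volume (-r) r := by
    rw [intervalIntegrable_iff_integrableOn_Ioc_of_le (by linarith)]
    refine intervalIntegral.integrableOn_deriv_of_nonneg hcont hderiv fun u hu => ?_
    exact div_nonneg (sqrt_nonneg _) (by linarith [hu.2])
  refine ⟨hint, ?_⟩
  rw [intervalIntegral.integral_eq_sub_of_hasDerivAt_of_le (by linarith) hcont hderiv hint]
  simp only [neg_sq, sub_self, sqrt_zero, neg_div, div_self hr.ne', arcsin_one, arcsin_neg_one]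
  linear_combination -hG

/-- The semicircle on `[m, p]` has the expected Cauchy transform at `w ≥ p`. -/
lemma integral_sqrt_div_sub_s10 {m p w : ℝ} (hmp : m < p) (hw : p ≤ w) :
    IntervalIntegrable (fun x => √((p - x) * (x - m)) / (w - x)) MeasureTheory.volume m p ∧
      ∫ x in m..p, √((p - x) * (x - m)) / (w - x)
        = π * (w - (m + p) / 2 - √((w - m) * (w - p))) := by
  obtain ⟨hi, he⟩ := semicircle_cauchy_transform_s10 (r := (p - m) / 2) (c := w - (m + p) / 2)
    (by linarith) (by linarith)
  have hfun : (fun x => √((p - x) * (x - m)) / (w - x)) = fun x =>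
      √(((p - m) / 2) ^ 2 - (x - (m + p) / 2) ^ 2) / (w - (m + p) / 2 - (x - (m + p) / 2)) := by
    funext x
    rw [sub_sub_sub_cancel_right]
    congr 2
    ring
  have hm : m - (m + p) / 2 = -((p - m) / 2) := by ring
  have hp : p - (m + p) / 2 = (p - m) / 2 := by ring
  rw [hfun]
  constructor
  · convert hi.comp_sub_right ((m + p) / 2) using 1 <;> ring
  · rw [intervalIntegral.integral_comp_sub_right
      (fun u => √(((p - m) / 2) ^ 2 - u ^ 2) / (w - (m + p) / 2 - u)), hm, hp, he]
    congr 3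
    ring

/-- Reflection of `integral_sqrt_div_sub`, for the point `0` to the left of the support. -/
lemma integral_sqrt_div_self {m p : ℝ} (hmp : m < p) (hm : 0 ≤ m) :
    IntervalIntegrable (fun x => √((p - x) * (x - m)) / x) MeasureTheory.volume m p ∧
      ∫ x in m..p, √((p - x) * (x - m)) / x = π * ((m + p) / 2 - √(m * p)) := by
  obtain ⟨hi, he⟩ := integral_sqrt_div_sub_s10 (m := -p) (p := -m) (w := 0)
    (by linarith) (by linarith)
  have hfun : (fun x => √((p - x) * (x - m)) / x) = fun x =>
      √((-m - -x) * (-x - -p)) / (0 - -x) := by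
    funext x
    congr 2 <;> ring
  rw [hfun]
  constructor
  · simpa using (hi.comp_sub_left 0).symm
  · rw [intervalIntegral.integral_comp_neg (fun y => √((-m - y) * (y - -p)) / (0 - y)), he]
    rw [show (0 - -p) * (0 - -m) = m * p by ring]
    ring

/-- The Cauchy transform of the Wachter law. -/
theorem wachter_cauchy_transform (a b : ℝ) (ha : 1 ≤ a) (hb : 1 ≤ b) (μm μp : ℝ)
    (hμm : μm = ((Real.sqrt b - Real.sqrt (a * (a + b - 1))) / (a + b)) ^ 2)
    (hμp : μp = ((Real.sqrt b + Real.sqrt (a * (a + b - 1))) / (a + b)) ^ 2)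
    (z : ℝ) (hz : 1 < z) :
    ∫ x in μm..μp,
        (1 / (z - x)) * ((a + b) * Real.sqrt ((μp - x) * (x - μm)) / (2 * π * x * (1 - x)))
      = (1 - a + (a + b - 2) * z -
          Real.sqrt ((a + 1 - (a + b) * z) ^ 2 - 4 * a * (1 - z))) / (2 * z * (1 - z)) := by
  have hab : 0 < a + b := by linarith
  have hd : 0 < a * (a + b - 1) := mul_pos (by linarith) (by linarith)
  have hsb := sqrt_pos.2 (show 0 < b by linarith)
  have hsd := sqrt_pos.2 hd
  have hsb2 := sq_sqrt (show 0 ≤ b by linarith)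
  have hsd2 := sq_sqrt hd.le
  have hsum : μm + μp = 2 * (b + a * (a + b - 1)) / (a + b) ^ 2 := by
    rw [hμm, hμp]
    field_simp
    linear_combination 2 * hsb2 + 2 * hsd2
  have hprod : μm * μp = ((a - 1) / (a + b)) ^ 2 := by
    have hroot : (√b - √(a * (a + b - 1))) * (√b + √(a * (a + b - 1)))
        = -((a - 1) * (a + b)) := by linear_combination hsb2 - hsd2
    rw [hμm, hμp, ← mul_pow, div_mul_div_comm, hroot]
    field_simp
  have hprod1 : (1 - μm) * (1 - μp) = ((b - 1) / (a + b)) ^ 2 := by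
    rw [show (1 - μm) * (1 - μp) = 1 - (μm + μp) + μm * μp by ring, hsum, hprod]
    field_simp
    ring
  have hprodz : (z - μm) * (z - μp)
      = ((a + 1 - (a + b) * z) ^ 2 - 4 * a * (1 - z)) / (a + b) ^ 2 := by
    rw [show (z - μm) * (z - μp) = z ^ 2 - (μm + μp) * z + μm * μp by ring, hsum, hprod]
    field_simp
    ring
  have hm0 : 0 ≤ μm := by rw [hμm]; positivity
  have hlt : μm < μp := by
    have : μp - μm = 4 * √b * √(a * (a + b - 1)) / (a + b) ^ 2 := by
      rw [hμm, hμp]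
      field_simp
      ring
    have : 0 < μp - μm := by rw [this]; positivity
    linarith
  have hp1 : μp ≤ 1 := by
    have hlt2 : μm + μp ≤ 2 := by
      rw [hsum, div_le_iff₀ (by positivity)]
      nlinarith
    nlinarith [sq_nonneg ((b - 1) / (a + b))]
  obtain ⟨hi0, he0⟩ := integral_sqrt_div_self hlt hm0
  obtain ⟨hi1, he1⟩ := integral_sqrt_div_sub_s10 hlt hp1
  obtain ⟨hiz, hez⟩ := integral_sqrt_div_sub_s10 hlt (hp1.trans hz.le)
  rw [hprod, sqrt_sq (div_nonneg (by linarith) hab.le)] at he0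
  rw [hprod1, sqrt_sq (div_nonneg (by linarith) hab.le)] at he1
  rw [hprodz, sqrt_div' _ (by positivity), sqrt_sq hab.le] at hez
  have hz0 : z ≠ 0 := by linarith
  have hz1 : z - 1 ≠ 0 := by linarith
  have hz1' : 1 - z ≠ 0 := by linarith
  have hπ := pi_ne_zero
  have hcongr : ∫ x in μm..μp,
        (1 / (z - x)) * ((a + b) * √((μp - x) * (x - μm)) / (2 * π * x * (1 - x)))
      = ∫ x in μm..μp, ((a + b) / (2 * π * z) * (√((μp - x) * (x - μm)) / x)
          + (a + b) / (2 * π * (z - 1)) * (√((μp - x) * (x - μm)) / (1 - x))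
          + (a + b) / (2 * π * (z * (1 - z))) * (√((μp - x) * (x - μm)) / (z - x))) := by
    refine intervalIntegral.integral_congr_Ioo_of_le hlt.le fun x hx => ?_
    have hx0 : x ≠ 0 := by linarith [hx.1]
    have hx1 : 1 - x ≠ 0 := by linarith [hx.2]
    have hxz : z - x ≠ 0 := by linarith [hx.2]
    field_simp
    ring
  rw [hcongr, intervalIntegral.integral_add ((hi0.const_mul _).add (hi1.const_mul _))
      (hiz.const_mul _), intervalIntegral.integral_add (hi0.const_mul _) (hi1.const_mul _)]
  simp only [intervalIntegral.integral_const_mul]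
  rw [he0, he1, hez]
  field_simp
  ring
end

section
/- Let λ ≥ 1 and λ± = (1 ± √λ)². There exists ε > 0 such that for all w with 0 < w < ε: λ/(1-w) + 1/w > λ₊ and ∫_{λ₋}^{λ₊} (1/(λ/(1-w) + 1/w - x)) · √((λ₊-x)(x-λ₋))/(2πx) dx = w. (Equivalently, R(w) = λ/(1-w) is the R-transform of the Marchenko–Pastur law: G(R(w) + 1/w) = w for its Cauchy transform G.) -/
open Real

/-- Derivative of the arcsine part of the primitive of `√(r² - t²) / (c - t)`. -/
theorem hasDerivAt_mul_arcsin_div_sub {r c D t : ℝ} (hr : 0 < r) (hc : r ≤ c) (hD : 0 ≤ D)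
    (hD2 : D ^ 2 = c ^ 2 - r ^ 2) (ht₁ : -r < t) (ht₂ : t < r) :
    HasDerivAt (fun t ↦ D * arcsin ((c * t - r ^ 2) / (r * (c - t))))
      (D ^ 2 / ((c - t) * √(r ^ 2 - t ^ 2))) t := by
  rcases hD.eq_or_lt with rfl | hD
  · simpa using hasDerivAt_const t (0 : ℝ)
  have hct : 0 < c - t := by linarith
  have hq2 : 0 < r ^ 2 - t ^ 2 := by nlinarith
  have hq : 0 < √(r ^ 2 - t ^ 2) := sqrt_pos.2 hq2
  have hs : 1 - ((c * t - r ^ 2) / (r * (c - t))) ^ 2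
      = (D * √(r ^ 2 - t ^ 2) / (r * (c - t))) ^ 2 := by
    rw [div_pow, div_pow, mul_pow D, sq_sqrt hq2.le, hD2]
    field_simp
    ring
  have hpos : 0 < D * √(r ^ 2 - t ^ 2) / (r * (c - t)) := by positivity
  have hlt : ((c * t - r ^ 2) / (r * (c - t))) ^ 2 < 1 := by nlinarith
  have habs := abs_lt.1 ((sq_lt_one_iff_abs_lt_one _).1 hlt)
  have hg : HasDerivAt (fun t ↦ (c * t - r ^ 2) / (r * (c - t)))
      (D ^ 2 / (r * (c - t) ^ 2)) t := by
    have hnum : HasDerivAt (fun t ↦ c * t - r ^ 2) c t := by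
      simpa using ((hasDerivAt_id t).const_mul c).sub_const (r ^ 2)
    have hden : HasDerivAt (fun t ↦ r * (c - t)) (-r) t := by
      simpa using ((hasDerivAt_id t).const_sub c).const_mul r
    refine (hnum.div hden (by positivity)).congr_deriv ?_
    rw [hD2]
    field_simp
    ring
  refine (((hasDerivAt_arcsin habs.1.ne' habs.2.ne).comp t hg).const_mul D).congr_deriv ?_
  rw [hs, sqrt_sq hpos.le]
  field_simp

theorem hasDerivAt_primitive_sqrt_div_sub {r c D t : ℝ} (hr : 0 < r) (hc : r ≤ c) (hD : 0 ≤ D)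
    (hD2 : D ^ 2 = c ^ 2 - r ^ 2) (ht₁ : -r < t) (ht₂ : t < r) :
    HasDerivAt (fun t ↦ -√(r ^ 2 - t ^ 2) + c * arcsin (t / r)
        - D * arcsin ((c * t - r ^ 2) / (r * (c - t))))
      (√(r ^ 2 - t ^ 2) / (c - t)) t := by
  have hct : 0 < c - t := by linarith
  have hq2 : 0 < r ^ 2 - t ^ 2 := by nlinarith
  have hq : 0 < √(r ^ 2 - t ^ 2) := sqrt_pos.2 hq2
  have h₁ : HasDerivAt (fun t ↦ √(r ^ 2 - t ^ 2)) (-(2 * t) / (2 * √(r ^ 2 - t ^ 2))) t := by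
    refine HasDerivAt.sqrt ?_ hq2.ne'
    simpa using (hasDerivAt_pow 2 t).const_sub (r ^ 2)
  have h₂ : HasDerivAt (fun t ↦ arcsin (t / r)) (1 / √(r ^ 2 - t ^ 2)) t := by
    have ha : -1 < t / r := by rw [lt_div_iff₀ hr]; linarith
    have hb : t / r < 1 := by rw [div_lt_iff₀ hr]; linarith
    refine ((hasDerivAt_arcsin ha.ne' hb.ne).comp t
      ((hasDerivAt_id t).div_const r)).congr_deriv ?_
    have hs : 1 - (t / r) ^ 2 = (√(r ^ 2 - t ^ 2) / r) ^ 2 := by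
      rw [div_pow, div_pow, sq_sqrt hq2.le]
      field_simp
    rw [hs, sqrt_sq (by positivity)]
    field_simp
  refine ((h₁.neg.add (h₂.const_mul c)).sub
    (hasDerivAt_mul_arcsin_div_sub hr hc hD hD2 ht₁ ht₂)).congr_deriv ?_
  rw [hD2]
  field_simp
  rw [sq_sqrt hq2.le]
  ring

theorem continuousOn_primitive_sqrt_div_sub {r c D : ℝ} (hr : 0 < r) (hc : r ≤ c)
    (hD2 : D ^ 2 = c ^ 2 - r ^ 2) :
    ContinuousOn (fun t ↦ -√(r ^ 2 - t ^ 2) + c * arcsin (t / r)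
      - D * arcsin ((c * t - r ^ 2) / (r * (c - t)))) (Set.Icc (-r) r) := by
  refine ContinuousOn.sub (by fun_prop) ?_
  rcases eq_or_ne D 0 with rfl | hD
  · simpa using continuousOn_const
  have hrc : r < c := by
    refine lt_of_le_of_ne hc ?_
    rintro rfl
    exact hD (by simpa using hD2)
  refine continuousOn_const.mul (continuous_arcsin.comp_continuousOn ?_)
  refine ContinuousOn.div (by fun_prop) (by fun_prop) fun t ht ↦ ?_
  have : 0 < c - t := by linarith [ht.2]
  positivity

theorem intervalIntegrable_sqrt_div_sub_s11 {r c : ℝ} (hr : 0 < r) (hc : r ≤ c) :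
    IntervalIntegrable (fun t ↦ √(r ^ 2 - t ^ 2) / (c - t)) MeasureTheory.volume (-r) r := by
  have hsq : 0 ≤ c ^ 2 - r ^ 2 := by nlinarith
  have hD2 := sq_sqrt hsq
  rw [intervalIntegrable_iff_integrableOn_Ioc_of_le (by linarith)]
  refine intervalIntegral.integrableOn_deriv_of_nonneg
    (continuousOn_primitive_sqrt_div_sub hr hc hD2)
    (fun t ht ↦ hasDerivAt_primitive_sqrt_div_sub hr hc (sqrt_nonneg _) hD2 ht.1 ht.2)
    fun t ht ↦ div_nonneg (sqrt_nonneg _) (by linarith [ht.2])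

/-- The Cauchy transform of the (unnormalized) semicircle density, up to the edge of the
support. -/
theorem integral_sqrt_div_sub_s11 {r c : ℝ} (hr : 0 < r) (hc : r ≤ c) :
    ∫ t in -r..r, √(r ^ 2 - t ^ 2) / (c - t) = π * (c - √(c ^ 2 - r ^ 2)) := by
  have hsq : 0 ≤ c ^ 2 - r ^ 2 := by nlinarith
  have hD2 := sq_sqrt hsq
  rw [intervalIntegral.integral_eq_sub_of_hasDerivAt_of_le (by linarith)
    (continuousOn_primitive_sqrt_div_sub hr hc hD2)
    (fun t ht ↦ hasDerivAt_primitive_sqrt_div_sub hr hc (sqrt_nonneg _) hD2 ht.1 ht.2)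
    (intervalIntegrable_sqrt_div_sub_s11 hr hc)]
  have hl : (c * -r - r ^ 2) / (r * (c - -r)) = -1 := by
    have : c - -r ≠ 0 := by linarith
    field_simp
    ring
  have hlr : -r / r = -1 := by field_simp
  rcases hc.eq_or_lt with rfl | hrc
  · simp [hr.ne', hlr]
    ring
  have hu : (c * r - r ^ 2) / (r * (c - r)) = 1 := by
    have : c - r ≠ 0 := by linarith
    field_simp
  rw [hl, hu, hlr, div_self hr.ne', arcsin_neg, arcsin_one, neg_sq, sub_self, sqrt_zero]
  ring

/-- The Cauchy transform of the Marchenko–Pastur density, with support `[m - r, m + r]`. -/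
theorem integral_one_div_sub_mul_sqrt_div {m r z : ℝ} (hr : 0 < r) (hm : r ≤ m)
    (hz : m + r ≤ z) :
    ∫ x in (m - r)..(m + r), (1 / (z - x)) *
        (√((m + r - x) * (x - (m - r))) / (2 * π * x))
      = (z - √(m ^ 2 - r ^ 2) - √((z - m) ^ 2 - r ^ 2)) / (2 * z) := by
  have hz₀ : 0 < z := by linarith
  have hc : r ≤ z - m := by linarith
  have hI := intervalIntegrable_sqrt_div_sub_s11 hr hm
  have hI' : IntervalIntegrable (fun t ↦ √(r ^ 2 - t ^ 2) / (m + t))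
      MeasureTheory.volume (-r) r := by
    simpa using (hI.comp_sub_left 0).symm
  have hneg : ∫ t in -r..r, √(r ^ 2 - t ^ 2) / (m + t) = π * (m - √(m ^ 2 - r ^ 2)) := by
    have hfun : (fun t ↦ √(r ^ 2 - t ^ 2) / (m + t))
        = fun t ↦ (fun t ↦ √(r ^ 2 - t ^ 2) / (m - t)) (-t) := by
      funext t
      simp only [sub_neg_eq_add, neg_sq]
    rw [hfun]
    refine (intervalIntegral.integral_comp_neg (E := ℝ)
      (fun t ↦ √(r ^ 2 - t ^ 2) / (m - t))).trans ?_
    rw [neg_neg, integral_sqrt_div_sub_s11 hr hm]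
  have hshift := intervalIntegral.integral_comp_add_right (a := -r) (b := r)
    (fun x ↦ (1 / (z - x)) * (√((m + r - x) * (x - (m - r))) / (2 * π * x))) m
  rw [show -r + m = m - r by ring, show r + m = m + r by ring] at hshift
  rw [← hshift]
  have hcongr : ∫ t in -r..r, (1 / (z - (t + m))) *
        (√((m + r - (t + m)) * (t + m - (m - r))) / (2 * π * (t + m)))
      = ∫ t in -r..r, 1 / (2 * π * z) *
        (√(r ^ 2 - t ^ 2) / (m + t) + √(r ^ 2 - t ^ 2) / (z - m - t)) := by
    refine intervalIntegral.integral_congr_ae ?_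
    filter_upwards [MeasureTheory.Measure.ae_ne MeasureTheory.volume r] with t htr ht
    rw [Set.uIoc_of_le (by linarith)] at ht
    have htr' : t < r := lt_of_le_of_ne ht.2 htr
    have h₁ : m + t ≠ 0 := by linarith [ht.1]
    have h₂ : z - m - t ≠ 0 := by linarith
    rw [show (m + r - (t + m)) * (t + m - (m - r)) = r ^ 2 - t ^ 2 by ring,
      show z - (t + m) = z - m - t by ring, show t + m = m + t by ring]
    field_simp
    ring
  rw [hcongr, intervalIntegral.integral_const_mul,
    intervalIntegral.integral_add hI' (intervalIntegrable_sqrt_div_sub_s11 hr hc), hneg,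
    integral_sqrt_div_sub_s11 hr hc]
  field_simp
  ring

/-- `R(w) = λ/(1-w)` is the R-transform of the Marchenko–Pastur law. -/
theorem marchenko_pastur_R_transform (l : ℝ) (hl : 1 ≤ l) (lm lp : ℝ)
    (hlm : lm = (1 - Real.sqrt l) ^ 2) (hlp : lp = (1 + Real.sqrt l) ^ 2) :
    ∃ ε > 0, ∀ w : ℝ, 0 < w → w < ε →
      lp < l / (1 - w) + 1 / w ∧
      ∫ x in lm..lp,
          (1 / (l / (1 - w) + 1 / w - x)) * (Real.sqrt ((lp - x) * (x - lm)) / (2 * π * x))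
        = w := by
  obtain ⟨s, hs⟩ : ∃ s, s = √l := ⟨_, rfl⟩
  have hs₁ : 1 ≤ s := by rw [hs]; exact one_le_sqrt.2 hl
  have hls : l = s ^ 2 := by rw [hs, sq_sqrt (by linarith)]
  rw [← hs] at hlm hlp
  have hlm' : lm = 1 + s ^ 2 - 2 * s := by rw [hlm]; ring
  have hlp' : lp = 1 + s ^ 2 + 2 * s := by rw [hlp]; ring
  refine ⟨1 / (1 + s), by positivity, fun w hw hwε ↦ ?_⟩
  rw [lt_div_iff₀ (by linarith)] at hwε
  have hw₁ : 0 < 1 - w := by nlinarith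
  obtain ⟨p, hp⟩ : ∃ p, p = (1 - w) / w := ⟨_, rfl⟩
  have hps : s < p := by rw [hp, lt_div_iff₀ hw]; linarith
  have hp₀ : 0 < p := by linarith
  have hwp : w = 1 / (1 + p) := by rw [hp]; field_simp; ring
  have hz : l / (1 - w) + 1 / w = 1 + s ^ 2 + (s ^ 2 / p + p) := by
    rw [hls, hp]
    field_simp
    ring
  have hgap : s ^ 2 / p + p - 2 * s = (p - s) ^ 2 / p := by field_simp; ring
  have hgap_pos : 0 < (p - s) ^ 2 / p := div_pos (pow_pos (by linarith) 2) hp₀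
  have hlt : lp < l / (1 - w) + 1 / w := by rw [hz, hlp']; linarith
  refine ⟨hlt, ?_⟩
  rw [hlm', hlp', integral_one_div_sub_mul_sqrt_div (by linarith)
    (by nlinarith [sq_nonneg (s - 1)]) (by linarith), hz]
  have h₁ : √((1 + s ^ 2) ^ 2 - (2 * s) ^ 2) = s ^ 2 - 1 := by
    rw [show (1 + s ^ 2) ^ 2 - (2 * s) ^ 2 = (s ^ 2 - 1) ^ 2 by ring]
    exact sqrt_sq (by nlinarith)
  have h₂ : √((1 + s ^ 2 + (s ^ 2 / p + p) - (1 + s ^ 2)) ^ 2 - (2 * s) ^ 2)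
      = p - s ^ 2 / p := by
    rw [show (1 + s ^ 2 + (s ^ 2 / p + p) - (1 + s ^ 2)) ^ 2 - (2 * s) ^ 2
      = (p - s ^ 2 / p) ^ 2 by field_simp; ring]
    refine sqrt_sq ?_
    rw [sub_nonneg, div_le_iff₀ hp₀]
    nlinarith
  rw [h₁, h₂, hwp, div_eq_div_iff (by positivity) (by positivity)]
  field_simp
  ring
end

section
/- Let v ≥ 2 be real and set R(w) = (-v + v√(1+4w²))/(2w) for w ≠ 0. There exists ε > 0 such that for all w with 0 < w < ε: R(w) + 1/w > 2√(v-1) and ∫_{-2√(v-1)}^{2√(v-1)} (1/(R(w) + 1/w - x)) · v√(4(v-1)-x²)/(2π(v²-x²)) dx = w. (That is, R is the R-transform of the Kesten–McKay law.) -/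
open Real

/-- An antiderivative of `√(a² - x²) / (z - x)` on `(-a, a)`, where `s² = z² - a²`. -/
theorem hasDerivAt_sqrt_sub_sq_div {a z s x : ℝ} (hs : 0 ≤ s) (hsq : s ^ 2 = z ^ 2 - a ^ 2)
    (haz : a ≤ z) (hx : x ∈ Set.Ioo (-a) a) :
    HasDerivAt (fun x => z * arcsin (x / a) - √(a ^ 2 - x ^ 2)
      - s * arcsin ((z * x - a ^ 2) / (a * (z - x)))) (√(a ^ 2 - x ^ 2) / (z - x)) x := by
  obtain ⟨h1, h2⟩ := hx
  have ha : 0 < a := by linarith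
  have hzx : 0 < z - x := by linarith
  have hp : 0 < a ^ 2 - x ^ 2 := by nlinarith
  have hr : 0 < √(a ^ 2 - x ^ 2) := sqrt_pos.2 hp
  have hr2 : √(a ^ 2 - x ^ 2) ^ 2 = a ^ 2 - x ^ 2 := sq_sqrt hp.le
  have hroot : HasDerivAt (fun x => √(a ^ 2 - x ^ 2)) (-x / √(a ^ 2 - x ^ 2)) x := by
    have h := (((hasDerivAt_id x).pow 2).const_sub (a ^ 2)).sqrt hp.ne'
    refine h.congr_deriv ?_
    simp
    field_simp
  have harc : HasDerivAt (fun x => arcsin (x / a)) (1 / √(a ^ 2 - x ^ 2)) x := by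
    have hl : -1 < x / a := by rw [lt_div_iff₀ ha]; linarith
    have hu : x / a < 1 := by rw [div_lt_one ha]; exact h2
    have h := (hasDerivAt_arcsin hl.ne' hu.ne).comp x ((hasDerivAt_id x).div_const a)
    refine h.congr_deriv ?_
    have e : 1 - (x / a) ^ 2 = (a ^ 2 - x ^ 2) / a ^ 2 := by field_simp
    rw [e, sqrt_div hp.le, sqrt_sq ha.le]
    field_simp
  have hmob : HasDerivAt (fun x => s * arcsin ((z * x - a ^ 2) / (a * (z - x))))
      (s ^ 2 / ((z - x) * √(a ^ 2 - x ^ 2))) x := by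
    rcases hs.eq_or_lt with rfl | hs0
    · simpa using hasDerivAt_const x (0 : ℝ)
    have hza : 0 < z - a := by
      have : 0 < (z - a) * (z + a) := by nlinarith [pow_pos hs0 2]
      exact pos_of_mul_pos_left this (by linarith)
    have hd : 0 < a * (z - x) := mul_pos ha hzx
    have hl : -1 < (z * x - a ^ 2) / (a * (z - x)) := by rw [lt_div_iff₀ hd]; nlinarith
    have hu : (z * x - a ^ 2) / (a * (z - x)) < 1 := by rw [div_lt_one hd]; nlinarith
    have hm : HasDerivAt (fun x => (z * x - a ^ 2) / (a * (z - x)))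
        (s ^ 2 / (a * (z - x) ^ 2)) x := by
      have h := (((hasDerivAt_id x).const_mul z).sub_const (a ^ 2)).div
        (((hasDerivAt_id x).const_sub z).const_mul a) hd.ne'
      refine h.congr_deriv ?_
      simp only [id]
      rw [hsq]
      field_simp
      ring
    have h := ((hasDerivAt_arcsin hl.ne' hu.ne).comp x hm).const_mul s
    refine h.congr_deriv ?_
    have e : 1 - ((z * x - a ^ 2) / (a * (z - x))) ^ 2
        = (s * √(a ^ 2 - x ^ 2) / (a * (z - x))) ^ 2 := by
      rw [div_pow, div_pow, mul_pow s, hr2, hsq]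
      field_simp
      ring
    rw [e, sqrt_sq (by positivity)]
    field_simp
  refine (((harc.const_mul z).sub hroot).sub hmob).congr_deriv ?_
  rw [hsq]
  field_simp
  rw [hr2]
  ring

/-- The Cauchy transform of the (unnormalised) semicircle law of radius `a`, up to the edge. -/
theorem integral_sqrt_sub_sq_div {a z s : ℝ} (ha : 0 < a) (hs : 0 ≤ s)
    (hsq : s ^ 2 = z ^ 2 - a ^ 2) (haz : a ≤ z) :
    IntervalIntegrable (fun x => √(a ^ 2 - x ^ 2) / (z - x)) MeasureTheory.volume (-a) a ∧
      ∫ x in (-a)..a, √(a ^ 2 - x ^ 2) / (z - x) = π * (z - s) := by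
  have hle : -a ≤ a := by linarith
  have hderiv := fun x hx => hasDerivAt_sqrt_sub_sq_div (x := x) hs hsq haz hx
  have hza : s ≠ 0 → a < z := fun h0 => haz.lt_of_ne (by
    rintro rfl
    exact h0 (by simpa using hsq))
  have hcont : ContinuousOn (fun x => z * arcsin (x / a) - √(a ^ 2 - x ^ 2)
      - s * arcsin ((z * x - a ^ 2) / (a * (z - x)))) (Set.Icc (-a) a) := by
    have hleft : Continuous (fun x => z * arcsin (x / a) - √(a ^ 2 - x ^ 2)) := by fun_prop
    refine hleft.continuousOn.sub ?_
    by_cases h0 : s = 0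
    · simpa [h0] using continuousOn_const
    refine continuousOn_const.mul (continuous_arcsin.comp_continuousOn ?_)
    refine ContinuousOn.div (by fun_prop) (by fun_prop) fun x hx => ?_
    exact (mul_pos ha (by linarith [hx.2, hza h0])).ne'
  have hint : IntervalIntegrable (fun x => √(a ^ 2 - x ^ 2) / (z - x))
      MeasureTheory.volume (-a) a := by
    apply intervalIntegral.intervalIntegrable_deriv_of_nonneg
    · rwa [Set.uIcc_of_le hle]
    · simpa [hle] using hderiv
    · intro x hx
      simp only [hle, min_eq_left, max_eq_right] at hx
      exact div_nonneg (sqrt_nonneg _) (by linarith [hx.2])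
  refine ⟨hint, ?_⟩
  rw [intervalIntegral.integral_eq_sub_of_hasDerivAt_of_le hle hcont hderiv hint]
  have e1 : s * arcsin ((z * a - a ^ 2) / (a * (z - a))) = s * (π / 2) := by
    by_cases h0 : s = 0
    · simp [h0]
    have : z - a ≠ 0 := (sub_pos.2 (hza h0)).ne'
    rw [show (z * a - a ^ 2) / (a * (z - a)) = 1 by field_simp, arcsin_one]
  have e2 : arcsin ((z * -a - a ^ 2) / (a * (z - -a))) = -(π / 2) := by
    have : z + a ≠ 0 := by linarith
    rw [show (z * -a - a ^ 2) / (a * (z - -a)) = -1 by rw [sub_neg_eq_add]; field_simp; ring,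
      arcsin_neg_one]
  rw [e1, e2, neg_div, div_self ha.ne', arcsin_one, arcsin_neg_one, neg_sq, sub_self, sqrt_zero]
  ring

/-- The Cauchy transform of the Kesten–McKay law to the right of `v`. -/
theorem integral_kesten_mckay {v z s : ℝ} (hv : 2 ≤ v) (hz : v < z) (hs : 0 ≤ s)
    (hsq : s ^ 2 = z ^ 2 - 4 * (v - 1)) :
    ∫ x in (-(2 * √(v - 1)))..(2 * √(v - 1)),
        (1 / (z - x)) * (v * √(4 * (v - 1) - x ^ 2) / (2 * π * (v ^ 2 - x ^ 2)))
      = (z - v * (z - s) / 2) / (z ^ 2 - v ^ 2) := by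
  have ha : 0 < 2 * √(v - 1) := mul_pos two_pos (sqrt_pos.2 (by linarith))
  have ha2 : 4 * (v - 1) = (2 * √(v - 1)) ^ 2 := by
    rw [mul_pow, sq_sqrt (by linarith)]; norm_num
  generalize 2 * √(v - 1) = a at ha ha2 ⊢
  have hav : a ≤ v := abs_le_of_sq_le_sq' (by nlinarith [sq_nonneg (v - 2)]) (by linarith) |>.2
  rw [ha2] at hsq ⊢
  obtain ⟨iz, Iz⟩ := integral_sqrt_sub_sq_div ha hs hsq (by linarith)
  obtain ⟨iv, Iv⟩ := integral_sqrt_sub_sq_div (z := v) (s := v - 2) ha (by linarith)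
    (by linear_combination -ha2) hav
  have ineg : IntervalIntegrable (fun x => √(a ^ 2 - x ^ 2) / (v + x))
      MeasureTheory.volume (-a) a := by
    simpa only [neg_sq, sub_neg_eq_add, neg_neg] using
      ((IntervalIntegrable.iff_comp_neg (by simp)).1 iv).symm
  have Ineg : ∫ x in (-a)..a, √(a ^ 2 - x ^ 2) / (v + x) = π * (v - (v - 2)) := by
    rw [← Iv]
    have h := intervalIntegral.integral_comp_neg (a := -a) (b := a)
      (fun x : ℝ => √(a ^ 2 - x ^ 2) / (v - x))
    simpa only [neg_sq, sub_neg_eq_add, neg_neg] using h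
  have hzv : z - v ≠ 0 := by linarith
  have hzv' : z + v ≠ 0 := by linarith
  have hv0 : v ≠ 0 := by linarith
  have key : Set.EqOn
      (fun x => (1 / (z - x)) * (v * √(a ^ 2 - x ^ 2) / (2 * π * (v ^ 2 - x ^ 2))))
      (fun x => v / (2 * π * (v ^ 2 - z ^ 2)) * (√(a ^ 2 - x ^ 2) / (z - x))
        + 1 / (4 * π * (z - v)) * (√(a ^ 2 - x ^ 2) / (v - x))
        + 1 / (4 * π * (z + v)) * (√(a ^ 2 - x ^ 2) / (v + x))) (Set.uIcc (-a) a) := by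
    intro x hx
    rw [Set.uIcc_of_le (by linarith)] at hx
    obtain ⟨h1, h2⟩ := hx
    by_cases h0 : a ^ 2 - x ^ 2 = 0
    · simp [h0]
    have hxa : x ≠ a := by rintro rfl; simp at h0
    have hxa' : x ≠ -a := by rintro rfl; simp at h0
    have l1 : x < a := lt_of_le_of_ne h2 hxa
    have l2 : -a < x := lt_of_le_of_ne h1 hxa'.symm
    have n1 : z - x ≠ 0 := by linarith
    have n2 : v - x ≠ 0 := by linarith
    have n3 : v + x ≠ 0 := by linarith
    simp only
    rw [show v ^ 2 - x ^ 2 = (v - x) * (v + x) by ring,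
      show v ^ 2 - z ^ 2 = -((z - v) * (z + v)) by ring]
    field_simp
    ring
  rw [intervalIntegral.integral_congr key, intervalIntegral.integral_add
    ((iz.const_mul _).add (iv.const_mul _)) (ineg.const_mul _),
    intervalIntegral.integral_add (iz.const_mul _) (iv.const_mul _)]
  simp only [intervalIntegral.integral_const_mul]
  rw [Iz, Iv, Ineg, show v ^ 2 - z ^ 2 = -((z - v) * (z + v)) by ring,
    show z ^ 2 - v ^ 2 = (z - v) * (z + v) by ring]
  field_simp
  ring


/-- `R(w) = (-v + v√(1+4w²))/(2w)` is the R-transform of the Kesten–McKay law. -/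
theorem kesten_mckay_R_transform (v : ℝ) (hv : 2 ≤ v)
    (R : ℝ → ℝ) (hR : ∀ w : ℝ, w ≠ 0 → R w = (-v + v * Real.sqrt (1 + 4 * w ^ 2)) / (2 * w)) :
    ∃ ε > 0, ∀ w : ℝ, 0 < w → w < ε →
      2 * Real.sqrt (v - 1) < R w + 1 / w ∧
      ∫ x in (-(2 * Real.sqrt (v - 1)))..(2 * Real.sqrt (v - 1)),
          (1 / (R w + 1 / w - x)) *
            (v * Real.sqrt (4 * (v - 1) - x ^ 2) / (2 * π * (v ^ 2 - x ^ 2)))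
        = w := by
  have hv0 : 0 < v := by linarith
  refine ⟨1 / v, by positivity, fun w hw hwε => ?_⟩
  have hwv : w * v < 1 := (lt_div_iff₀ hv0).1 hwε
  rw [hR w hw.ne']
  have hq2 : √(1 + 4 * w ^ 2) ^ 2 = 1 + 4 * w ^ 2 := sq_sqrt (by positivity)
  have hq1 : 1 ≤ √(1 + 4 * w ^ 2) := one_le_sqrt.2 (by nlinarith)
  have hqw : √(1 + 4 * w ^ 2) ≤ 1 + 2 * w := sqrt_le_iff.2 ⟨by linarith, by nlinarith⟩
  generalize √(1 + 4 * w ^ 2) = q at hq1 hq2 hqw ⊢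
  have hz : v < (-v + v * q) / (2 * w) + 1 / w := by
    rw [show (-v + v * q) / (2 * w) + 1 / w = (-v + v * q + 2) / (2 * w) by field_simp,
      lt_div_iff₀ (by positivity)]
    nlinarith
  have hedge : 2 * √(v - 1) ≤ v := by
    nlinarith [sq_sqrt (show 0 ≤ v - 1 by linarith), sq_nonneg (√(v - 1) - 1)]
  refine ⟨hedge.trans_lt hz, ?_⟩
  have hs : 0 ≤ (v - (v - 2) * q) / (2 * w) := div_nonneg (by nlinarith) (by positivity)
  have hsq : ((v - (v - 2) * q) / (2 * w)) ^ 2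
      = ((-v + v * q) / (2 * w) + 1 / w) ^ 2 - 4 * (v - 1) := by
    field_simp
    linear_combination (-4 * (v - 1)) * hq2
  rw [integral_kesten_mckay hv hz hs hsq, div_eq_iff (by nlinarith)]
  field_simp
  linear_combination (-v ^ 2) * hq2
end

section
/- Let a, b ≥ 1, let μ₋, μ₊ = ((√b ∓ √(a(a+b-1)))/(a+b))², and set R(w) = (-a - b + w + √((a+b)² + 2(a-b)w + w²))/(2w) for w ≠ 0. There exists ε > 0 such that for all w with 0 < w < ε: R(w) + 1/w > μ₊ and ∫_{μ₋}^{μ₊} (1/(R(w) + 1/w - x)) · (a+b)√((μ₊-x)(x-μ₋))/(2πx(1-x)) dx = w. (That is, R is the R-transform of the Wachter law.) -/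
open Real

/-- The function `C arcsin s - h √(1-s²) - q arcsin ((C s - h)/(C - h s))` is an antiderivative of
`h² √(1-s²)/(C - h s)` when `C² - h² = q²`. -/
lemma hasDerivAt_semicircle_div_antideriv {C h q s : ℝ} (hh : 0 < h) (hC : h ≤ C) (hq : 0 ≤ q)
    (hCq : C ^ 2 - h ^ 2 = q ^ 2) (hs : s ∈ Set.Ioo (-1 : ℝ) 1) :
    HasDerivAt
      (fun s => C * arcsin s - h * √(1 - s ^ 2) - q * arcsin ((C * s - h) / (C - h * s)))
      (h ^ 2 * (√(1 - s ^ 2) / (C - h * s))) s := by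
  obtain ⟨hs₁, hs₂⟩ := hs
  have hden : 0 < C - h * s := by nlinarith
  have hden_ne : C - s * h ≠ 0 := by linarith
  have hpos : 0 < 1 - s ^ 2 := by nlinarith
  have hr : 0 < √(1 - s ^ 2) := sqrt_pos.mpr hpos
  have hr2 : √(1 - s ^ 2) ^ 2 = 1 - s ^ 2 := sq_sqrt hpos.le
  have harcsin : HasDerivAt (fun s => C * arcsin s) (C * (1 / √(1 - s ^ 2))) s :=
    (hasDerivAt_arcsin (by linarith) (by linarith)).const_mul C
  have hsqrt : HasDerivAt (fun s => h * √(1 - s ^ 2)) (h * (-(2 * s) / (2 * √(1 - s ^ 2)))) s := by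
    have hsq : HasDerivAt (fun s : ℝ => 1 - s ^ 2) (-(2 * s)) s := by
      simpa using (hasDerivAt_pow 2 s).const_sub 1
    exact (hsq.sqrt hpos.ne').const_mul h
  have hmoebius : HasDerivAt (fun s => q * arcsin ((C * s - h) / (C - h * s)))
      (q * (q / ((C - h * s) * √(1 - s ^ 2)))) s := by
    rcases hq.eq_or_lt with rfl | hq
    · simpa using hasDerivAt_const s (0 : ℝ)
    have hone : 1 - ((C * s - h) / (C - h * s)) ^ 2
        = (q * √(1 - s ^ 2) / (C - h * s)) ^ 2 := by
      rw [div_pow, div_pow, mul_pow, hr2, ← hCq]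
      field_simp
      ring
    have hu : ((C * s - h) / (C - h * s)) ^ 2 < 1 := by
      have : 0 < (q * √(1 - s ^ 2) / (C - h * s)) ^ 2 := by positivity
      linarith
    have hu' := abs_lt.mp ((sq_lt_one_iff_abs_lt_one _).mp hu)
    have hnum : HasDerivAt (fun s => C * s - h) C s := by
      simpa using ((hasDerivAt_id s).const_mul C).sub_const h
    have hdenom : HasDerivAt (fun s => C - h * s) (-h) s := by
      simpa using ((hasDerivAt_id s).const_mul h).const_sub C
    have hcomp := ((hasDerivAt_arcsin hu'.1.ne' hu'.2.ne).comp s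
      (hnum.div hdenom hden.ne')).const_mul q
    refine hcomp.congr_deriv ?_
    rw [hone, sqrt_sq (by positivity)]
    have : C * (C - h * s) - (C * s - h) * -h = q ^ 2 := by linear_combination hCq
    rw [this]
    field_simp
  refine ((harcsin.sub hsqrt).sub hmoebius).congr_deriv ?_
  field_simp
  rw [hr2]
  linear_combination hCq

lemma continuousOn_semicircle_div_antideriv {C h q : ℝ} (hh : 0 < h) (hC : h ≤ C)
    (hCq : C ^ 2 - h ^ 2 = q ^ 2) :
    ContinuousOn
      (fun s => C * arcsin s - h * √(1 - s ^ 2) - q * arcsin ((C * s - h) / (C - h * s)))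
      (Set.Icc (-1) 1) := by
  have hmoebius : ContinuousOn (fun s => q * arcsin ((C * s - h) / (C - h * s)))
      (Set.Icc (-1) 1) := by
    rcases eq_or_ne q 0 with rfl | hq
    · simpa using continuousOn_const
    have hlt : h < C := by
      rcases hC.eq_or_lt with rfl | hlt
      · exact absurd (by simpa using hCq.symm) hq
      · exact hlt
    refine continuousOn_const.mul (continuous_arcsin.comp_continuousOn ?_)
    refine ContinuousOn.div (by fun_prop) (by fun_prop) fun s hs => ?_
    have : 0 < C - h * s := by nlinarith [hs.2]
    exact this.ne'
  have hrest : Continuous fun s => C * arcsin s - h * √(1 - s ^ 2) := by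
    have := continuous_arcsin
    fun_prop
  exact hrest.continuousOn.sub hmoebius

lemma intervalIntegrable_semicircle_div {C h q : ℝ} (hh : 0 < h) (hC : h ≤ C) (hq : 0 ≤ q)
    (hCq : C ^ 2 - h ^ 2 = q ^ 2) :
    IntervalIntegrable (fun s => √(1 - s ^ 2) / (C - h * s)) MeasureTheory.volume (-1) 1 := by
  have hint : IntervalIntegrable (fun s => h ^ 2 * (√(1 - s ^ 2) / (C - h * s)))
      MeasureTheory.volume (-1) 1 := by
    refine intervalIntegral.intervalIntegrable_deriv_of_nonneg
      (g := fun s => C * arcsin s - h * √(1 - s ^ 2) - q * arcsin ((C * s - h) / (C - h * s)))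
      ?_ ?_ ?_
    · rw [Set.uIcc_of_le (by norm_num)]
      exact continuousOn_semicircle_div_antideriv hh hC hCq
    · intro s hs
      exact hasDerivAt_semicircle_div_antideriv hh hC hq hCq (by simpa using hs)
    · intro s hs
      have hs' : s < 1 := by simpa using hs.2
      have : 0 < C - h * s := by nlinarith
      positivity
  have hmul := hint.const_mul (h ^ 2)⁻¹
  simpa [inv_mul_cancel_left₀ (pow_ne_zero 2 hh.ne')] using hmul

lemma integral_semicircle_div {C h q : ℝ} (hh : 0 < h) (hC : h ≤ C) (hq : 0 ≤ q)
    (hCq : C ^ 2 - h ^ 2 = q ^ 2) :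
    ∫ s in (-1 : ℝ)..1, √(1 - s ^ 2) / (C - h * s) = π * (C - q) / h ^ 2 := by
  have hftc := intervalIntegral.integral_eq_sub_of_hasDerivAt_of_le (by norm_num)
    (continuousOn_semicircle_div_antideriv hh hC hCq)
    (fun s hs => hasDerivAt_semicircle_div_antideriv hh hC hq hCq hs)
    ((intervalIntegrable_semicircle_div hh hC hq hCq).const_mul (h ^ 2))
  have hright : q * arcsin ((C * 1 - h) / (C - h * 1)) = q * (π / 2) := by
    rcases hC.eq_or_lt with rfl | hlt
    · have : q = 0 := by simpa using hCq.symm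
      simp [this]
    · rw [mul_one, mul_one, div_self (by linarith), arcsin_one]
  have hleft : arcsin ((C * (-1) - h) / (C - h * (-1))) = -(π / 2) := by
    rw [show C * (-1) - h = -(C - h * (-1)) by ring, neg_div, div_self (by linarith),
      arcsin_neg, arcsin_one]
  rw [intervalIntegral.integral_const_mul, hright, hleft, arcsin_neg, arcsin_one] at hftc
  rw [eq_div_iff (by positivity), mul_comm, hftc]
  norm_num
  ring

/-- The partial fraction decomposition of `1/(x(1-x)(z-x))`, integrated against a semicircle
centred at `M` with radius `h`. -/
lemma integral_semicircle_div_three_poles {M h z q₀ q₁ q : ℝ} (hh : 0 < h) (hM₀ : h ≤ M)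
    (hM₁ : h ≤ 1 - M) (hz : 1 < z) (hq₀ : 0 ≤ q₀) (hq₁ : 0 ≤ q₁) (hq : 0 ≤ q)
    (h₀ : M ^ 2 - h ^ 2 = q₀ ^ 2) (h₁ : (1 - M) ^ 2 - h ^ 2 = q₁ ^ 2)
    (h₂ : (z - M) ^ 2 - h ^ 2 = q ^ 2) :
    ∫ x in (M - h)..(M + h), 1 / (z - x) * (√((M + h - x) * (x - (M - h))) / (x * (1 - x)))
      = π * ((q - q₀ * (z - 1) - q₁ * z) / (z * (z - 1))) := by
  have hzM : h ≤ z - M := by linarith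
  have hi₀ := (IntervalIntegrable.iff_comp_neg (by finiteness)).mp
    (intervalIntegrable_semicircle_div hh hM₀ hq₀ h₀).symm
  have hi₁ := intervalIntegrable_semicircle_div hh hM₁ hq₁ h₁
  have hi₂ := intervalIntegrable_semicircle_div hh hzM hq h₂
  have hv₀ : ∫ s in (-1 : ℝ)..1, √(1 - s ^ 2) / (M + h * s) = π * (M - q₀) / h ^ 2 := by
    rw [← integral_semicircle_div hh hM₀ hq₀ h₀,
      ← neg_neg (1 : ℝ), ← intervalIntegral.integral_comp_neg]
    simp [sub_eq_add_neg]
  have hv₁ := integral_semicircle_div hh hM₁ hq₁ h₁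
  have hv₂ := integral_semicircle_div hh hzM hq h₂
  simp only [neg_neg, even_two, Even.neg_pow, mul_neg, sub_neg_eq_add] at hi₀
  have hsubst := intervalIntegral.mul_integral_comp_add_mul (a := (-1 : ℝ)) (b := 1)
    (f := fun x => 1 / (z - x) * (√((M + h - x) * (x - (M - h))) / (x * (1 - x)))) h M
  rw [show M + h * -1 = M - h by ring, mul_one] at hsubst
  rw [← hsubst, ← intervalIntegral.integral_const_mul]
  have hpf : ∀ s ∈ Set.uIcc (-1 : ℝ) 1,
      h * (1 / (z - (M + h * s)) * (√((M + h - (M + h * s)) * (M + h * s - (M - h))) /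
        ((M + h * s) * (1 - (M + h * s))))) =
      h ^ 2 / z * (√(1 - s ^ 2) / (M + h * s)) + h ^ 2 / (z - 1) * (√(1 - s ^ 2) / (1 - M - h * s))
        - h ^ 2 / (z * (z - 1)) * (√(1 - s ^ 2) / (z - M - h * s)) := by
    intro s hs
    rw [Set.uIcc_of_le (by norm_num)] at hs
    have hroot : √((M + h - (M + h * s)) * (M + h * s - (M - h))) = h * √(1 - s ^ 2) := by
      rw [show (M + h - (M + h * s)) * (M + h * s - (M - h)) = h ^ 2 * (1 - s ^ 2) by ring,
        sqrt_mul (by positivity), sqrt_sq hh.le]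
    rw [hroot]
    rcases hs.1.eq_or_lt with rfl | hs₁
    · norm_num
    rcases hs.2.eq_or_lt with rfl | hs₂
    · norm_num
    have hx₀ : M + h * s ≠ 0 := by nlinarith
    have hx₁ : 1 - M - h * s ≠ 0 := by nlinarith
    have hx₂ : z - M - h * s ≠ 0 := by nlinarith
    have hz₀ : z ≠ 0 := by linarith
    have hz₁ : z - 1 ≠ 0 := by linarith
    rw [← sub_sub, ← sub_sub]
    field_simp
    ring
  rw [intervalIntegral.integral_congr hpf, intervalIntegral.integral_sub
    ((hi₀.const_mul _).add (hi₁.const_mul _)) (hi₂.const_mul _),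
    intervalIntegral.integral_add (hi₀.const_mul _) (hi₁.const_mul _),
    intervalIntegral.integral_const_mul, intervalIntegral.integral_const_mul,
    intervalIntegral.integral_const_mul, hv₀, hv₁, hv₂]
  have hz₀ : z ≠ 0 := by linarith
  have hz₁ : z - 1 ≠ 0 := by linarith
  field_simp
  ring

/-- `R(w) = (-a-b+w+√((a+b)²+2(a-b)w+w²))/(2w)` is the R-transform of the Wachter law. -/
theorem wachter_R_transform (a b : ℝ) (ha : 1 ≤ a) (hb : 1 ≤ b) (μm μp : ℝ)
    (hμm : μm = ((Real.sqrt b - Real.sqrt (a * (a + b - 1))) / (a + b)) ^ 2)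
    (hμp : μp = ((Real.sqrt b + Real.sqrt (a * (a + b - 1))) / (a + b)) ^ 2)
    (R : ℝ → ℝ)
    (hR : ∀ w : ℝ, w ≠ 0 →
      R w = (-a - b + w + Real.sqrt ((a + b) ^ 2 + 2 * (a - b) * w + w ^ 2)) / (2 * w)) :
    ∃ ε > 0, ∀ w : ℝ, 0 < w → w < ε →
      μp < R w + 1 / w ∧
      ∫ x in μm..μp,
          (1 / (R w + 1 / w - x)) *
            ((a + b) * Real.sqrt ((μp - x) * (x - μm)) / (2 * π * x * (1 - x)))
        = w := by
  have hprod : 0 < a * (a + b - 1) := mul_pos (by linarith) (by linarith)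
  have hab : 0 < a + b := by linarith
  have hβ : 0 < √b := sqrt_pos.mpr (by linarith)
  have hα : 0 < √(a * (a + b - 1)) := sqrt_pos.mpr hprod
  have hβ2 : √b ^ 2 = b := sq_sqrt (by linarith)
  have hα2 : √(a * (a + b - 1)) ^ 2 = a * (a + b - 1) := sq_sqrt hprod.le
  set β := √b
  set α := √(a * (a + b - 1))
  obtain ⟨M, hM⟩ : ∃ M, M = (b + a * (a + b - 1)) / (a + b) ^ 2 := ⟨_, rfl⟩
  obtain ⟨h, hh⟩ : ∃ h, h = 2 * α * β / (a + b) ^ 2 := ⟨_, rfl⟩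
  have hm : μm = M - h := by
    rw [hμm, hM, hh]
    field_simp
    linear_combination hβ2 + hα2
  have hp : μp = M + h := by
    rw [hμp, hM, hh]
    field_simp
    linear_combination hβ2 + hα2
  have hpos : 0 < h := by rw [hh]; positivity
  have hh2 : h ^ 2 = 4 * (a * (a + b - 1)) * b / (a + b) ^ 4 := by
    rw [hh, div_pow, mul_pow, mul_pow, hα2, hβ2]
    ring
  have h₀ : M ^ 2 - h ^ 2 = ((a - 1) / (a + b)) ^ 2 := by
    rw [hh2, hM]
    field_simp
    ring
  have h₁ : (1 - M) ^ 2 - h ^ 2 = ((b - 1) / (a + b)) ^ 2 := by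
    rw [hh2, hM]
    field_simp
    ring
  have hM₀ : h ≤ M := by
    have : 0 ≤ μm := by rw [hμm]; positivity
    linarith
  have hM₁ : h ≤ 1 - M := by
    have hnonneg : 0 ≤ 1 - M := by
      rw [hM, sub_nonneg, div_le_one (by positivity)]
      nlinarith
    refine (sq_le_sq₀ hpos.le hnonneg).mp ?_
    linarith [sq_nonneg ((b - 1) / (a + b))]
  refine ⟨1, one_pos, fun w hw hw₁ => ?_⟩
  have hrad : 0 ≤ (a + b) ^ 2 + 2 * (a - b) * w + w ^ 2 := by
    nlinarith [sq_nonneg (a - b + w), mul_pos (show 0 < a by linarith) (show 0 < b by linarith)]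
  have hRw := hR w hw.ne'
  have hS2 := sq_sqrt hrad
  have hS0 := sqrt_nonneg ((a + b) ^ 2 + 2 * (a - b) * w + w ^ 2)
  set S := √((a + b) ^ 2 + 2 * (a - b) * w + w ^ 2)
  obtain ⟨z, hz⟩ : ∃ z, z = R w + 1 / w := ⟨_, rfl⟩
  have hzS : 2 * w * z = 2 - a - b + w + S := by
    rw [hz, hRw]
    field_simp
    ring
  have hS : a + b - 2 + w < S := by
    refine lt_of_pow_lt_pow_left₀ 2 hS0 ?_
    rw [hS2]
    have : 0 ≤ (b - 1) * (1 - w) := mul_nonneg (by linarith) (by linarith)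
    linarith
  have hz₁ : 1 < z := by
    have : 0 < 2 * w * (z - 1) := by linarith
    linarith [pos_of_mul_pos_right this (by positivity)]
  rw [← hz]
  refine ⟨by linarith, ?_⟩
  have hquad : z * (z - 1) * w ^ 2 + ((a + b - 2) * z - (a - 1)) * w - (a + b - 1) = 0 := by
    have hS' : S = 2 * w * z - (2 - a - b + w) := by linarith
    rw [hS'] at hS2
    linear_combination hS2 / 4
  obtain ⟨D, hD⟩ : ∃ D, D = 2 * z * (z - 1) * w + (a + b - 2) * z - (a - 1) := ⟨_, rfl⟩
  have hD0 : 0 ≤ D := by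
    have hpole : 0 < z * (z - 1) * w := mul_pos (mul_pos (by linarith) (by linarith)) hw
    have hleft : 0 ≤ (a - 1) * (z - 1) := mul_nonneg (by linarith) (by linarith)
    have hright : 0 ≤ (b - 1) * z := mul_nonneg (by linarith) (by linarith)
    linarith
  have h₂ : (z - M) ^ 2 - h ^ 2 = (D / (a + b)) ^ 2 := by
    have hD2 : D ^ 2 = ((a + b - 2) * z - (a - 1)) ^ 2 + 4 * (a + b - 1) * z * (z - 1) := by
      rw [hD]
      linear_combination 4 * z * (z - 1) * hquad
    rw [div_pow, hD2, hh2, hM]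
    field_simp
    ring
  have key := integral_semicircle_div_three_poles hpos hM₀ hM₁ hz₁
    (div_nonneg (by linarith) hab.le) (div_nonneg (by linarith) hab.le)
    (div_nonneg hD0 hab.le) h₀ h₁ h₂
  rw [hm, hp]
  calc _ = ∫ x in (M - h)..(M + h), (a + b) / (2 * π) *
        (1 / (z - x) * (√((M + h - x) * (x - (M - h))) / (x * (1 - x)))) := by
        congr 1
        ext x
        rw [mul_assoc (2 * π), mul_div_mul_comm]
        ring
    _ = w := by
        rw [intervalIntegral.integral_const_mul, key, hD]
        have hz₀ : z ≠ 0 := by linarith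
        have hz₁' : z - 1 ≠ 0 := by linarith
        field_simp
        ring
end

section
/- Let v be real. For every real w with 0 < |w| < 1/2, the series Σ_{m=0}^{∞} (-1)^m · v · C_m · w^{2m+1} converges and its sum equals (-v + v√(1+4w²))/(2w). (Consequently, the nonzero free cumulants of the Kesten–McKay law with parameter v are κ_n = (-1)^{(n-2)/2} v C_{(n-2)/2} for even n ≥ 2.) -/
open Real

/-- The partial sums of `∑ catalan m / 4 ^ m` telescope. -/
lemma sum_range_catalan_div_four_pow (n : ℕ) :
    ∑ m ∈ Finset.range n, (catalan m : ℝ) / 4 ^ m = 2 * (1 - (n.centralBinom : ℝ) / 4 ^ n) := by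
  induction n with
  | zero => simp
  | succ n ih =>
    have hc : ((n : ℝ) + 1) * catalan n = n.centralBinom := by
      exact_mod_cast succ_mul_catalan_eq_centralBinom n
    have hb : ((n : ℝ) + 1) * (n + 1).centralBinom = 2 * (2 * n + 1) * n.centralBinom := by
      exact_mod_cast Nat.succ_mul_centralBinom_succ n
    have hs : ((n + 1).centralBinom : ℝ) = 2 * (2 * n + 1) * catalan n := by
      have hn : (n : ℝ) + 1 ≠ 0 := by positivity
      apply mul_left_cancel₀ hn
      rw [hb, ← hc]
      ring
    rw [Finset.sum_range_succ, ih, hs, ← hc, pow_succ]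
    field_simp
    ring

lemma sum_range_catalan_div_four_pow_le (n : ℕ) :
    ∑ m ∈ Finset.range n, (catalan m : ℝ) / 4 ^ m ≤ 2 := by
  rw [sum_range_catalan_div_four_pow]
  have : (0 : ℝ) ≤ (n.centralBinom : ℝ) / 4 ^ n := by positivity
  linarith

lemma summable_catalan_div_four_pow : Summable fun m : ℕ => (catalan m : ℝ) / 4 ^ m :=
  summable_of_sum_range_le (fun _ => by positivity) sum_range_catalan_div_four_pow_le

lemma norm_catalan_mul_pow_le {x : ℝ} (hx : |x| ≤ 1 / 4) (m : ℕ) :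
    ‖(catalan m : ℝ) * x ^ m‖ ≤ (catalan m : ℝ) / 4 ^ m := by
  rw [norm_mul, norm_pow, Real.norm_eq_abs x, Real.norm_natCast, div_eq_mul_inv, ← inv_pow]
  gcongr
  simpa using hx

lemma summable_norm_catalan_mul_pow {x : ℝ} (hx : |x| ≤ 1 / 4) :
    Summable fun m : ℕ => ‖(catalan m : ℝ) * x ^ m‖ :=
  summable_catalan_div_four_pow.of_nonneg_of_le (fun _ => norm_nonneg _)
    (norm_catalan_mul_pow_le hx)

lemma abs_tsum_catalan_mul_pow_le {x : ℝ} (hx : |x| ≤ 1 / 4) :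
    |∑' m : ℕ, (catalan m : ℝ) * x ^ m| ≤ 2 :=
  (tsum_of_norm_bounded summable_catalan_div_four_pow.hasSum (norm_catalan_mul_pow_le hx)).trans
    (Real.tsum_le_of_sum_range_le (fun _ => by positivity) sum_range_catalan_div_four_pow_le)

/-- The functional equation of the Catalan generating function. -/
lemma tsum_catalan_mul_pow_eq {x : ℝ} (hx : |x| ≤ 1 / 4) :
    ∑' m : ℕ, (catalan m : ℝ) * x ^ m = 1 + x * (∑' m : ℕ, (catalan m : ℝ) * x ^ m) ^ 2 := by
  have hs := summable_norm_catalan_mul_pow hx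
  rw [sq, tsum_mul_tsum_eq_tsum_sum_antidiagonal_of_summable_norm hs hs,
    hs.of_norm.tsum_eq_zero_add, ← tsum_mul_left]
  congr 1
  · simp
  · refine tsum_congr fun n => ?_
    rw [catalan_succ', Nat.cast_sum, Finset.sum_mul, Finset.mul_sum]
    refine Finset.sum_congr rfl fun p hp => ?_
    rw [← Finset.HasAntidiagonal.mem_antidiagonal.mp hp]
    push_cast
    ring

lemma one_sub_two_mul_tsum_catalan_mul_pow {x : ℝ} (hx : |x| ≤ 1 / 4) :
    1 - 2 * x * ∑' m : ℕ, (catalan m : ℝ) * x ^ m = √(1 - 4 * x) := by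
  have hF := tsum_catalan_mul_pow_eq hx
  have hb := abs_tsum_catalan_mul_pow_le hx
  set F := ∑' m : ℕ, (catalan m : ℝ) * x ^ m
  have hxF : |x * F| ≤ 1 / 4 * 2 := by
    rw [abs_mul]
    gcongr
  rw [show 1 - 4 * x = (1 - 2 * x * F) ^ 2 by linear_combination (4 * x) * hF, Real.sqrt_sq]
  linarith [le_abs_self (x * F)]

/-- The free cumulants of the Kesten–McKay law: the Taylor expansion of its R-transform
has coefficients given by signed Catalan numbers. -/
theorem kesten_mckay_free_cumulants (v : ℝ) (w : ℝ) (hw0 : 0 < |w|) (hw : |w| < 1 / 2) :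
    HasSum (fun m : ℕ => (-1) ^ m * v * (catalan m : ℝ) * w ^ (2 * m + 1))
      ((-v + v * Real.sqrt (1 + 4 * w ^ 2)) / (2 * w)) := by
  have hx : |-w ^ 2| ≤ 1 / 4 := by
    rw [abs_neg, abs_pow]
    nlinarith
  have hw' : w ≠ 0 := abs_pos.mp hw0
  have hsqrt := one_sub_two_mul_tsum_catalan_mul_pow hx
  have hval : (-v + v * √(1 + 4 * w ^ 2)) / (2 * w) =
      v * w * ∑' m : ℕ, (catalan m : ℝ) * (-w ^ 2) ^ m := by
    rw [show 1 + 4 * w ^ 2 = 1 - 4 * -w ^ 2 by ring, ← hsqrt]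
    field_simp
    ring
  have hterm : (fun m : ℕ => (-1) ^ m * v * (catalan m : ℝ) * w ^ (2 * m + 1)) =
      fun m : ℕ => v * w * ((catalan m : ℝ) * (-w ^ 2) ^ m) := by
    funext m
    rw [neg_pow (w ^ 2), ← pow_mul]
    ring
  rw [hval, hterm]
  exact (summable_norm_catalan_mul_pow hx).of_norm.hasSum.mul_left (v * w)
end

section
/- Let λ ≥ 1 and λ± = (1 ± √λ)². Define q_0(x) = 1 and, for n ≥ 1, q_n(x) = λ^{(n-1)/2}(x-λ)·U_{n-1}((x-λ-1)/(2√λ)) − λ^{n/2}·U_{n-2}((x-λ-1)/(2√λ)) (with the convention U_{-1} = 0). Then for all natural numbers m ≠ n, ∫_{λ₋}^{λ₊} q_m(x) q_n(x) · √((λ₊-x)(x-λ₋))/(2πx) dx = 0; that is, the q_n are orthogonal with respect to the Marchenko–Pastur law. -/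
open Real Polynomial

/-- The polynomials orthogonal with respect to the Marchenko–Pastur law, written in terms
of Chebyshev polynomials of the second kind `U`. -/
noncomputable def mpOrthoPoly (l : ℝ) (n : ℕ) (x : ℝ) : ℝ :=
  if n = 0 then 1
  else
    l ^ (((n : ℝ) - 1) / 2) * (x - l) *
        (Polynomial.Chebyshev.U ℝ ((n : ℤ) - 1)).eval ((x - l - 1) / (2 * Real.sqrt l)) -
      l ^ ((n : ℝ) / 2) *
        (Polynomial.Chebyshev.U ℝ ((n : ℤ) - 2)).eval ((x - l - 1) / (2 * Real.sqrt l))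

/-- On the arc `x = 1 + s² + 2 s cos θ`, the polynomial `mpOrthoPoly (s²) n` times `sin θ` is a
combination of two sines. -/
lemma mpOrthoPoly_mul_sin {s : ℝ} (hs : 0 < s) (n : ℕ) (θ : ℝ) :
    mpOrthoPoly (s ^ 2) n (1 + s ^ 2 + 2 * s * cos θ) * sin θ =
      s ^ ((n : ℝ) - 1) * (s * sin ((n + 1) * θ) + sin (n * θ)) := by
  have hpow (y : ℝ) : (s ^ 2) ^ (y / 2) = s ^ y := by
    rw [← rpow_natCast, ← rpow_mul hs.le]
    congr 1
    push_cast
    ring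
  have hsn : s ^ (n : ℝ) = s ^ ((n : ℝ) - 1) * s := by
    rw [rpow_sub_one hs.ne', div_mul_cancel₀ _ hs.ne']
  unfold mpOrthoPoly
  split_ifs with h
  · subst h
    have : s ^ (-1 : ℝ) * s = 1 := by rw [rpow_neg_one, inv_mul_cancel₀ hs.ne']
    simp only [Nat.cast_zero, zero_sub, zero_add, one_mul, zero_mul, sin_zero, add_zero]
    linear_combination -sin θ * this
  · have harg : (1 + s ^ 2 + 2 * s * cos θ - s ^ 2 - 1) / (2 * √(s ^ 2)) = cos θ := by
      rw [sqrt_sq hs.le]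
      field_simp
      ring
    have h₁ := Chebyshev.U_real_cos θ ((n : ℤ) - 1)
    have h₂ := Chebyshev.U_real_cos θ ((n : ℤ) - 2)
    push_cast at h₁ h₂
    have hadd : sin ((n + 1) * θ) = 2 * cos θ * sin (n * θ) - sin ((n - 1) * θ) := by
      rw [add_mul, sub_mul, one_mul, sin_add, sin_sub]
      ring
    rw [harg, hpow, hpow, hsn, hadd]
    rw [show ((n : ℝ) - 1 + 1) = n by ring] at h₁
    rw [show ((n : ℝ) - 2 + 1) = n - 1 by ring] at h₂
    linear_combination s ^ ((n : ℝ) - 1) * (1 + 2 * s * cos θ) * h₁ -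
      s ^ ((n : ℝ) - 1) * s * h₂

lemma integral_cos_int_mul {k : ℤ} (hk : k ≠ 0) : ∫ θ in 0..π, cos (k * θ) = 0 := by
  have hk' : (k : ℝ) ≠ 0 := Int.cast_ne_zero.mpr hk
  rw [intervalIntegral.integral_comp_mul_left (fun x => cos x) hk', integral_cos]
  simp [sin_int_mul_pi]

lemma integral_cos_nat_mul_eq_zero {k : ℕ} (hk : k ≠ 0) : ∫ θ in 0..π, cos (k * θ) = 0 := by
  simpa using integral_cos_int_mul (k := k) (by exact_mod_cast hk)

lemma one_add_sq_add_cos_pos {s θ : ℝ} (hs : 0 < s) (hθ : θ ∈ Set.Ioo 0 π) :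
    0 < 1 + s ^ 2 + 2 * s * cos θ := by
  have h : -1 < cos θ := by
    rw [← cos_pi]
    exact cos_lt_cos_of_nonneg_of_le_pi hθ.1.le le_rfl hθ.2
  nlinarith [sq_nonneg (s - 1), mul_pos hs (by linarith : 0 < 1 + cos θ)]

/-- The real part of `zᵏ (1 + s z)² / |1 + s z|²` at `z = exp (i θ)`. -/
noncomputable def arcKernel (s : ℝ) (k : ℕ) (θ : ℝ) : ℝ :=
  (cos (k * θ) + 2 * s * cos ((k + 1) * θ) + s ^ 2 * cos ((k + 2) * θ)) /
    (1 + s ^ 2 + 2 * s * cos θ)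

lemma arcKernel_one {θ : ℝ} (hθ : θ ∈ Set.Ioo 0 π) (k : ℕ) :
    arcKernel 1 k θ = cos ((k + 1 : ℕ) * θ) := by
  have hx := one_add_sq_add_cos_pos one_pos hθ
  rw [arcKernel, div_eq_iff hx.ne']
  have h₀ : (k : ℝ) * θ = (k + 1) * θ - θ := by ring
  have h₂ : ((k : ℝ) + 2) * θ = (k + 1) * θ + θ := by ring
  rw [h₀, h₂, cos_add, cos_sub]
  push_cast
  ring

lemma one_add_sq_add_cos_ge {s : ℝ} (hs : 1 < s) (θ : ℝ) :
    (s - 1) ^ 2 ≤ 1 + s ^ 2 + 2 * s * cos θ := by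
  nlinarith [neg_one_le_cos θ]

lemma continuous_arcKernel {s : ℝ} (hs : 1 < s) (k : ℕ) : Continuous (arcKernel s k) := by
  unfold arcKernel
  refine Continuous.div (by fun_prop) (by fun_prop) fun θ => ?_
  have : 0 < (s - 1) ^ 2 := pow_pos (by linarith) 2
  exact (this.trans_le (one_add_sq_add_cos_ge hs θ)).ne'

lemma intervalIntegrable_arcKernel {s : ℝ} (hs : 1 ≤ s) (k : ℕ) :
    IntervalIntegrable (arcKernel s k) MeasureTheory.volume 0 π := by
  rcases hs.eq_or_lt with rfl | hs
  · refine IntervalIntegrable.congr_uIoo (f := fun θ => cos ((k + 1 : ℕ) * θ))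
      (Continuous.intervalIntegrable (by fun_prop) _ _) ?_
    rw [Set.uIoo_of_le pi_pos.le]
    exact fun θ hθ => (arcKernel_one hθ k).symm
  · exact (continuous_arcKernel hs k).intervalIntegrable _ _

lemma abs_arcKernel_le {s : ℝ} (hs : 1 < s) (k : ℕ) (θ : ℝ) :
    |arcKernel s k θ| ≤ (1 + s) ^ 2 / (s - 1) ^ 2 := by
  have hpos : 0 < (s - 1) ^ 2 := pow_pos (by linarith) 2
  have hx := one_add_sq_add_cos_ge hs θ
  rw [arcKernel, abs_div, abs_of_pos (hpos.trans_le hx)]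
  refine div_le_div₀ (by positivity) ?_ hpos hx
  rw [abs_le]
  constructor
  · nlinarith [neg_one_le_cos (k * θ), neg_one_le_cos ((k + 1) * θ),
      neg_one_le_cos ((k + 2) * θ)]
  · nlinarith [cos_le_one (k * θ), cos_le_one ((k + 1) * θ), cos_le_one ((k + 2) * θ)]

lemma arcKernel_succ {s : ℝ} (hs : 1 < s) (k : ℕ) (θ : ℝ) :
    arcKernel s (k + 1) θ =
      cos ((k + 1 : ℕ) * θ) + s * cos ((k + 2 : ℕ) * θ) - s * arcKernel s k θ := by
  have hx : 1 + s ^ 2 + 2 * s * cos θ ≠ 0 :=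
    ((pow_pos (by linarith : 0 < s - 1) 2).trans_le (one_add_sq_add_cos_ge hs θ)).ne'
  have h₀ : (k : ℝ) * θ = (k + 1) * θ - θ := by ring
  have h₂ : ((k : ℝ) + 2) * θ = (k + 1) * θ + θ := by ring
  have h₃ : ((k : ℝ) + 1 + 2) * θ = (k + 1) * θ + θ + θ := by ring
  have h₂' : ((k : ℝ) + 1 + 1) * θ = (k + 1) * θ + θ := by ring
  have hsin := sin_sq θ
  simp only [arcKernel]
  push_cast
  rw [h₀, h₂, h₃, h₂', ← mul_div_assoc, eq_sub_iff_add_eq, ← add_div, div_eq_iff hx]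
  simp only [cos_add, cos_sub, sin_add]
  linear_combination (-s ^ 2 * cos ((k + 1) * θ)) * hsin

lemma integral_arcKernel {s : ℝ} (hs : 1 ≤ s) (k : ℕ) : ∫ θ in 0..π, arcKernel s k θ = 0 := by
  rcases hs.eq_or_lt with rfl | hs
  · rw [intervalIntegral.integral_congr_Ioo_of_le pi_pos.le fun θ hθ => arcKernel_one hθ k]
    exact integral_cos_nat_mul_eq_zero k.succ_ne_zero
  have hsucc (j : ℕ) :
      ∫ θ in 0..π, arcKernel s (j + 1) θ = -s * ∫ θ in 0..π, arcKernel s j θ := by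
    have hcont := continuous_arcKernel hs j
    simp_rw [arcKernel_succ hs j]
    rw [intervalIntegral.integral_sub (Continuous.intervalIntegrable (by fun_prop) _ _)
        (Continuous.intervalIntegrable (by fun_prop) _ _),
      intervalIntegral.integral_add (Continuous.intervalIntegrable (by fun_prop) _ _)
        (Continuous.intervalIntegrable (by fun_prop) _ _),
      intervalIntegral.integral_const_mul, intervalIntegral.integral_const_mul,
      integral_cos_nat_mul_eq_zero (by lia), integral_cos_nat_mul_eq_zero (by lia)]
    ring
  have hiter (j : ℕ) :
      ∫ θ in 0..π, arcKernel s (k + j) θ = (-s) ^ j * ∫ θ in 0..π, arcKernel s k θ := by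
    induction j with
    | zero => simp
    | succ j ih => rw [← add_assoc, hsucc, ih]; ring
  by_contra hne
  set I := ∫ θ in 0..π, arcKernel s k θ
  set C := (1 + s) ^ 2 / (s - 1) ^ 2
  obtain ⟨j, hj⟩ := pow_unbounded_of_one_lt (C * π / |I|) hs
  have hbound : |∫ θ in 0..π, arcKernel s (k + j) θ| ≤ C * π := by
    simpa [abs_of_pos pi_pos] using intervalIntegral.norm_integral_le_of_norm_le_const
      (a := 0) (b := π) (f := arcKernel s (k + j)) (C := C)
      fun θ _ => abs_arcKernel_le hs (k + j) θ
  rw [hiter, abs_mul, abs_pow, abs_neg, abs_of_pos (by linarith)] at hbound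
  rw [div_lt_iff₀ (abs_pos.mpr hne)] at hj
  linarith

lemma sin_combination_mul_div {s θ : ℝ} (hs : 0 < s) (hθ : θ ∈ Set.Ioo 0 π) (m n : ℕ) :
    (s * sin ((m + 1) * θ) + sin (m * θ)) * (s * sin ((n + 1) * θ) + sin (n * θ)) /
        (1 + s ^ 2 + 2 * s * cos θ) =
      (cos (((m : ℤ) - n : ℤ) * θ) - arcKernel s (m + n) θ) / 2 := by
  have hx := (one_add_sq_add_cos_pos hs hθ).ne'
  have h₀ : ((m : ℝ) + n) * θ = m * θ + n * θ := by ring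
  have h₁ : ((m : ℝ) + n + 1) * θ = m * θ + n * θ + θ := by ring
  have h₂ : ((m : ℝ) + n + 2) * θ = m * θ + n * θ + θ + θ := by ring
  have hsin := sin_sq θ
  rw [arcKernel, div_eq_iff hx, div_mul_eq_mul_div, sub_mul, div_mul_cancel₀ _ hx]
  push_cast
  rw [h₀, h₁, h₂, add_mul (m : ℝ), add_mul (n : ℝ), one_mul, sub_mul]
  simp only [cos_add, cos_sub, sin_add]
  linear_combination s ^ 2 / 2 * (cos (m * θ) * cos (n * θ) + sin (m * θ) * sin (n * θ)) * hsin

/-- The polynomials `q_n` are orthogonal with respect to the Marchenko–Pastur law. -/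
theorem mpOrthoPoly_orthogonal (l : ℝ) (hl : 1 ≤ l) (lm lp : ℝ)
    (hlm : lm = (1 - Real.sqrt l) ^ 2) (hlp : lp = (1 + Real.sqrt l) ^ 2)
    (m n : ℕ) (hmn : m ≠ n) :
    ∫ x in lm..lp,
        mpOrthoPoly l m x * mpOrthoPoly l n x * (Real.sqrt ((lp - x) * (x - lm)) / (2 * π * x))
      = 0 := by
  obtain ⟨s, hs, rfl⟩ : ∃ s : ℝ, 1 ≤ s ∧ l = s ^ 2 :=
    ⟨√l, one_le_sqrt.mpr hl, (sq_sqrt (by linarith)).symm⟩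
  have hs₀ : 0 < s := by linarith
  rw [sqrt_sq hs₀.le] at hlm hlp
  have hsubst := intervalIntegral.integral_comp_mul_deriv_of_deriv_nonpos (a := 0) (b := π)
    (f := fun θ => 1 + s ^ 2 + 2 * s * cos θ) (f' := fun θ => 2 * s * -sin θ)
    (g := fun x => mpOrthoPoly (s ^ 2) m x * mpOrthoPoly (s ^ 2) n x *
      (√((lp - x) * (x - lm)) / (2 * π * x)))
    (by fun_prop) (fun θ _ => ((hasDerivAt_cos θ).const_mul (2 * s)).const_add (1 + s ^ 2))
    (fun θ hθ => by
      rw [min_eq_left pi_pos.le, max_eq_right pi_pos.le] at hθ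
      nlinarith [mul_pos hs₀ (sin_pos_of_mem_Ioo hθ)])
  have h₀ : 1 + s ^ 2 + 2 * s * cos 0 = lp := by rw [hlp, cos_zero]; ring
  have hπ : 1 + s ^ 2 + 2 * s * cos π = lm := by rw [hlm, cos_pi]; ring
  simp only [h₀, hπ] at hsubst
  rw [intervalIntegral.integral_symm, ← hsubst, neg_eq_zero]
  set c := -(s ^ 2 / π * s ^ ((m : ℝ) - 1) * s ^ ((n : ℝ) - 1))
  trans ∫ θ in 0..π, c * (cos (((m : ℤ) - n : ℤ) * θ) - arcKernel s (m + n) θ)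
  · refine intervalIntegral.integral_congr_Ioo_of_le pi_pos.le fun θ hθ => ?_
    have hsin := sin_pos_of_mem_Ioo hθ
    have hx := (one_add_sq_add_cos_pos hs₀ hθ).ne'
    have hsqrt : √((lp - (1 + s ^ 2 + 2 * s * cos θ)) * (1 + s ^ 2 + 2 * s * cos θ - lm)) =
        2 * s * sin θ := by
      rw [sqrt_eq_iff_mul_self_eq_of_pos (by positivity), hlp, hlm]
      linear_combination 4 * s ^ 2 * sin_sq θ
    have hm := mpOrthoPoly_mul_sin hs₀ m θ
    have hn := mpOrthoPoly_mul_sin hs₀ n θ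
    have hprod := sin_combination_mul_div hs₀ hθ m n
    simp only [Function.comp_apply, hsqrt]
    rw [eq_div_iff two_ne_zero] at hprod
    rw [← hprod]
    calc
      _ = -(2 * s ^ 2 / π) * (mpOrthoPoly (s ^ 2) m (1 + s ^ 2 + 2 * s * cos θ) * sin θ) *
          (mpOrthoPoly (s ^ 2) n (1 + s ^ 2 + 2 * s * cos θ) * sin θ) /
            (1 + s ^ 2 + 2 * s * cos θ) := by
        field_simp
      _ = _ := by
        rw [hm, hn]
        ring
  · rw [intervalIntegral.integral_const_mul, intervalIntegral.integral_sub
        (Continuous.intervalIntegrable (by fun_prop) _ _) (intervalIntegrable_arcKernel hs _),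
      integral_cos_int_mul (by lia), integral_arcKernel hs, sub_zero, mul_zero]
end
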